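/- Let k be a positive integer, let (μ_N)_{N=1}^∞ be distributions in D_c(k), and let p₁ < p₂ < ⋯ < p_N < ⋯ be positive integers. The following two statements are equivalent: (1) the p_N-fold free additive convolutions μ_N ⊞ ⋯ ⊞ μ_N converge in moments to some ν ∈ D_c(k) which is ⊞-infinitely divisible; (2) the p_N-fold Boolean convolutions μ_N ⊎ ⋯ ⊎ μ_N converge in moments to some μ ∈ D_c(k). Moreover, if (1) and (2) hold, then the resulting limits satisfy B(μ) = ν. -/

import Mathlib

open Finset

attribute [local instance] Classical.propDecidable

open scoped ComplexOrder

namespace BBP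

/-- Partitions of `{1,…,m}` modeled as `Finpartition`s of `univ : Finset (Fin m)`. -/
abbrev FP (m : ℕ) := Finpartition (Finset.univ : Finset (Fin m))

noncomputable instance (m : ℕ) : Fintype (FP m) :=
  Fintype.ofInjective (fun π : FP m => π.parts) fun a b h => by
    cases a; cases b; simpa using h

/-- `x` is the minimum of the set `C`. -/
def IsMinOf {m : ℕ} (x : Fin m) (C : Finset (Fin m)) : Prop :=
  x ∈ C ∧ ∀ y ∈ C, x ≤ y

/-- `x` is the maximum of the set `C`. -/
def IsMaxOf {m : ℕ} (x : Fin m) (C : Finset (Fin m)) : Prop :=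
  x ∈ C ∧ ∀ y ∈ C, y ≤ x

/-- `a` and `b` lie in one block of `π`. -/
def SameBlock {m : ℕ} (π : FP m) (a b : Fin m) : Prop :=
  ∃ B ∈ π.parts, a ∈ B ∧ b ∈ B

/-- `π` is non-crossing: if `i<j<k<l`, `i,k` in one block and `j,l` in one block,
then all of them are in one block. -/
def IsNC {m : ℕ} (π : FP m) : Prop :=
  ∀ i j k l : Fin m, i < j → j < k → k < l →
    SameBlock π i k → SameBlock π j l → SameBlock π i j

/-- `A` embraces `B` : `min A ≤ min B` and `max B ≤ max A`. -/
def Embraces {m : ℕ} (A B : Finset (Fin m)) : Prop :=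
  ∃ a₁ a₂ b₁ b₂ : Fin m, IsMinOf a₁ A ∧ IsMaxOf a₂ A ∧ IsMinOf b₁ B ∧ IsMaxOf b₂ B ∧
    a₁ ≤ b₁ ∧ b₂ ≤ a₂

/-- `B` strictly embraces `A` : `min B < min A` and `max A < max B`. -/
def StrictlyEmbraces {m : ℕ} (B A : Finset (Fin m)) : Prop :=
  ∃ b₁ b₂ a₁ a₂ : Fin m, IsMinOf b₁ B ∧ IsMaxOf b₂ B ∧ IsMinOf a₁ A ∧ IsMaxOf a₂ A ∧
    b₁ < a₁ ∧ a₂ < b₂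

/-- `A` is an outer block of `π`. -/
def IsOuter {m : ℕ} (π : FP m) (A : Finset (Fin m)) : Prop :=
  A ∈ π.parts ∧ ¬ ∃ B ∈ π.parts, StrictlyEmbraces B A

/-- The number `|π|_out` of outer blocks of `π`. -/
noncomputable def numOuter {m : ℕ} (π : FP m) : ℕ :=
  (π.parts.filter fun A => IsOuter π A).card

/-- Reversed refinement order: every block of `ρ` is a union of blocks of `π`. -/
def Refines {m : ℕ} (π ρ : FP m) : Prop :=
  ∀ B ∈ π.parts, ∃ C ∈ ρ.parts, B ⊆ C

/-- The partial order `π ≪ ρ`. -/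
def Ll {m : ℕ} (π ρ : FP m) : Prop :=
  Refines π ρ ∧
    ∀ C ∈ ρ.parts, ∃ B ∈ π.parts, ∃ x y : Fin m,
      IsMinOf x C ∧ IsMaxOf y C ∧ x ∈ B ∧ y ∈ B

/-- The partition `1ₙ` of `{1,…,n+1}` with a single block. -/
noncomputable def fullPart (n : ℕ) : FP (n+1) :=
  Finpartition.indiscrete (by simpa using (Finset.univ_nonempty (α := Fin (n+1))).ne_empty)

/-- `π` is an interval partition. -/
def IsIntervalPartition {m : ℕ} (π : FP m) : Prop :=
  ∀ B ∈ π.parts, ∀ x ∈ B, ∀ z ∈ B, ∀ y : Fin m, x ≤ y → y ≤ z → y ∈ B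

/-- `σ` is the permutation associated to `π` : on each block `{b₁ < ⋯ < b_q}` it is the
cycle `b₁ ↦ b₂ ↦ ⋯ ↦ b_q ↦ b₁`. -/
def IsAssocPerm {m : ℕ} (π : FP m) (σ : Equiv.Perm (Fin m)) : Prop :=
  ∀ B ∈ π.parts, ∀ b ∈ B, σ b ∈ B ∧
    ((b < σ b ∧ ∀ x ∈ B, b < x → σ b ≤ x) ∨ (IsMaxOf b B ∧ IsMinOf (σ b) B))

/-- `κ` is the Kreweras complement of `π`, characterized by `P_κ = P_π⁻¹ ∘ P_{1ₙ}`,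
where `P_{1ₙ}` is the cycle `1 ↦ 2 ↦ ⋯ ↦ n ↦ 1` (i.e. `finRotate`). -/
def IsKrewerasPair {m : ℕ} (π κ : FP m) : Prop :=
  ∃ σπ σκ : Equiv.Perm (Fin m), IsAssocPerm π σπ ∧ IsAssocPerm κ σκ ∧
    σκ = σπ⁻¹ * finRotate m

/-- the element `2a-1` of `{1,…,2n}`, in `Fin (2n)` (0-indexed). -/
def oddEmb {n : ℕ} (a : Fin n) : Fin (2*n) := ⟨2*a.val, by have := a.isLt; omega⟩

/-- the element `2a` of `{1,…,2n}`, in `Fin (2n)` (0-indexed). -/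
def evenEmb {n : ℕ} (a : Fin n) : Fin (2*n) := ⟨2*a.val + 1, by have := a.isLt; omega⟩

/-- `θ = π^(odd) ∪ ρ^(even)` : the blocks of `θ` are the sets `{2a-1 : a ∈ A}` for `A`
a block of `π` and the sets `{2b : b ∈ B}` for `B` a block of `ρ`. -/
def IsOddEvenJoin {n : ℕ} (π ρ : FP n) (θ : FP (2*n)) : Prop :=
  θ.parts = π.parts.image (fun B => B.image oddEmb) ∪
    ρ.parts.image (fun B => B.image evenEmb)

/-- a block consisting of odd elements of `{1,…,2n}` (even 0-indexed values). -/
def OddBlock {m : ℕ} (B : Finset (Fin m)) : Prop := ∀ x ∈ B, x.val % 2 = 0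

/-- a block consisting of even elements of `{1,…,2n}` (odd 0-indexed values). -/
def EvenBlock {m : ℕ} (B : Finset (Fin m)) : Prop := ∀ x ∈ B, x.val % 2 = 1

/-- every block of `θ` is contained in the odds or in the evens. -/
def ParityPreserving {m : ℕ} (θ : FP m) : Prop :=
  ∀ B ∈ θ.parts, OddBlock B ∨ EvenBlock B

def OppositeParity {m : ℕ} (A B : Finset (Fin m)) : Prop :=
  (OddBlock A ∧ EvenBlock B) ∨ (EvenBlock A ∧ OddBlock B)

def SameParity {m : ℕ} (A B : Finset (Fin m)) : Prop :=
  (OddBlock A ∧ OddBlock B) ∨ (EvenBlock A ∧ EvenBlock B)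

/-- `P = Parent_θ(A)` : the unique block `P ≠ A` of `θ` embracing `A` such that every
block `A' ≠ A` of `θ` embracing `A` also embraces `P`. -/
def IsParent {m : ℕ} (θ : FP m) (A P : Finset (Fin m)) : Prop :=
  P ∈ θ.parts ∧ P ≠ A ∧ Embraces P A ∧
    ∀ A' ∈ θ.parts, A' ≠ A → Embraces A' A → Embraces A' P

/-- `θ` has exactly two outer blocks. -/
def ExactlyTwoOuterBlocks {m : ℕ} (θ : FP m) : Prop :=
  ∃ M ∈ θ.parts, ∃ N ∈ θ.parts, M ≠ N ∧ IsOuter θ M ∧ IsOuter θ N ∧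
    ∀ A ∈ θ.parts, IsOuter θ A → A = M ∨ A = N

/-- A series in `ℂ₀⟨⟨z₁,…,z_k⟩⟩`, given by its family of coefficients: `f n w` is the
coefficient of `z_{w 0} z_{w 1} ⋯ z_{w n}` (a word of length `n+1 ≥ 1`). -/
abbrev NCSeries (k : ℕ) := (n : ℕ) → (Fin (n+1) → Fin k) → ℂ

/-- The coefficient `Cf_{w|B}(f)` of the restriction of the word `w` to the set `B`,
listing the elements of `B` in increasing order.  (Equals `1` for `B = ∅`.) -/
noncomputable def partCoeff {k m : ℕ} (f : NCSeries k) (w : Fin (m+1) → Fin k)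
    (B : Finset (Fin (m+1))) : ℂ :=
  if h : B.Nonempty then
    f (B.card - 1) (fun j =>
      w ((B.orderIsoOfFin (Nat.succ_pred_eq_of_pos (Finset.card_pos.mpr h)).symm j).1))
  else 1

/-- The generalized coefficient `Cf_{w;π}(f) = ∏_{B block of π} Cf_{w|B}(f)`. -/
noncomputable def genCoeff {k m : ℕ} (f : NCSeries k) (w : Fin (m+1) → Fin k)
    (π : FP (m+1)) : ℂ :=
  ∏ B ∈ π.parts, partCoeff f w B

/-- Linear functionals on `ℂ⟨X₁,…,X_k⟩`. -/
abbrev Dist (k : ℕ) := FreeAlgebra ℂ (Fin k) →ₗ[ℂ] ℂ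

/-- `μ ∈ D_alg(k)` : `μ` is normalized by `μ(1) = 1`. -/
def IsDalg {k : ℕ} (μ : Dist k) : Prop := μ 1 = 1

/-- The moment series `M_μ`, with `(momentSeries μ) n w = μ (X_{w 0} ⋯ X_{w n})`. -/
noncomputable def momentSeries {k : ℕ} (μ : Dist k) : NCSeries k :=
  fun _ w => μ ((List.ofFn fun j => FreeAlgebra.ι ℂ (w j)).prod)

/-- `f = R_μ` : the moments of `μ` are obtained from `f` by summation over all
non-crossing partitions. -/
def IsRTransform {k : ℕ} (μ : Dist k) (f : NCSeries k) : Prop :=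
  ∀ (n : ℕ) (w : Fin (n+1) → Fin k),
    momentSeries μ n w = ∑ π : FP (n+1), if IsNC π then genCoeff f w π else 0

/-- `g = η_μ` : the moments of `μ` are obtained from `g` by summation over all
interval partitions. -/
def IsEtaSeries {k : ℕ} (μ : Dist k) (g : NCSeries k) : Prop :=
  ∀ (n : ℕ) (w : Fin (n+1) → Fin k),
    momentSeries μ n w = ∑ π : FP (n+1), if IsIntervalPartition π then genCoeff g w π else 0

/-- `μ ∈ D_c(k)` : `μ` is the joint distribution of a `k`-tuple of selfadjoint elements
with respect to a state on a unital C*-algebra. -/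
def IsDc {k : ℕ} (μ : Dist k) : Prop :=
  IsDalg μ ∧
  ∃ (A : Type) (_ : NormedRing A) (_ : StarRing A) (_ : CStarRing A)
    (_ : NormedAlgebra ℂ A) (_ : StarModule ℂ A) (_ : CompleteSpace A)
    (φ : A →ₗ[ℂ] ℂ) (x : Fin k → A),
      φ 1 = 1 ∧ (∀ a : A, 0 ≤ φ (star a * a)) ∧ (∀ i, IsSelfAdjoint (x i)) ∧
      ∀ (n : ℕ) (w : Fin (n+1) → Fin k),
        momentSeries μ n w = φ ((List.ofFn fun j => x (w j)).prod)

/-- convergence in moments. -/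
def ConvInMoments {k : ℕ} (μseq : ℕ → Dist k) (μ : Dist k) : Prop :=
  ∀ P : FreeAlgebra ℂ (Fin k),
    Filter.Tendsto (fun N => μseq N P) Filter.atTop (nhds (μ P))

/-- coefficientwise convergence of series. -/
def ConvCoeffwise {k : ℕ} (fseq : ℕ → NCSeries k) (f : NCSeries k) : Prop :=
  ∀ (n : ℕ) (w : Fin (n+1) → Fin k),
    Filter.Tendsto (fun N => fseq N n w) Filter.atTop (nhds (f n w))

/-- `ν` is the `p`-fold free additive convolution `μ ⊞ ⋯ ⊞ μ`, i.e. `R_ν = p · R_μ`. -/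
def IsNFoldFree {k : ℕ} (p : ℕ) (μ ν : Dist k) : Prop :=
  ∃ f : NCSeries k, IsRTransform μ f ∧ IsRTransform ν (fun n w => (p : ℂ) * f n w)

/-- `ν` is the `p`-fold Boolean convolution `μ ⊎ ⋯ ⊎ μ`, i.e. `η_ν = p · η_μ`. -/
def IsNFoldBool {k : ℕ} (p : ℕ) (μ ν : Dist k) : Prop :=
  ∃ g : NCSeries k, IsEtaSeries μ g ∧ IsEtaSeries ν (fun n w => (p : ℂ) * g n w)

/-- `ν = 𝔹(μ)` : the Boolean Bercovici–Pata bijection, `R_{𝔹(μ)} = η_μ`. -/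
def IsBP {k : ℕ} (μ ν : Dist k) : Prop :=
  ∃ f : NCSeries k, IsEtaSeries μ f ∧ IsRTransform ν f

/-- `μ ∈ D_c(k)` is infinitely divisible with respect to `⊞`. -/
def IsInfDiv {k : ℕ} (μ : Dist k) : Prop :=
  IsDc μ ∧ ∀ N : ℕ, 0 < N → ∃ ν : Dist k, IsDc ν ∧ IsNFoldFree N ν μ

/-- `g = Reta(f)`, i.e. there is `μ ∈ D_alg(k)` with `f = R_μ` and `g = η_μ`. -/
def RetaRel {k : ℕ} (f g : NCSeries k) : Prop :=
  ∃ μ : Dist k, IsDalg μ ∧ IsRTransform μ f ∧ IsEtaSeries μ g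


section ListFock

variable {α : Type*}

/-- Sum over all decompositions `w = g ++ y :: r`. -/
noncomputable def splitSum : (List α → α → List α → ℂ) → List α → ℂ
  | _, [] => 0
  | F, x :: l => F [] x l + splitSum (fun g y r => F (x :: g) y r) l

/-- Coefficient attached to annihilation above the rest `s` of the stack. -/
noncomputable def annC (ε : ℂ) (s : List (List α)) : ℂ := if s = [] then 1 else ε

/-- Vacuum expectation of the word applied to a stack of open blocks. -/
noncomputable def Fk (ε : ℂ) (L : List α → ℂ) : List α → List (List α) → ℂ
  | [], [] => 1
  | [], _ :: _ => 0
  | x :: w, [] => Fk ε L w [[x]] + L [x] * Fk ε L w []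
  | x :: w, u :: s => Fk ε L w ([x] :: u :: s) + ε * L [x] * Fk ε L w (u :: s)
      + Fk ε L w ((u ++ [x]) :: s) + annC ε s * L (u ++ [x]) * Fk ε L w s

/-- the expansion with a partially filled first block `u` -/
noncomputable def Kf (ε : ℂ) (L : List α → ℂ) (u w : List α) : ℂ :=
  Fk ε L w [u] + L u * Fk ε L w []

lemma splitSum_add (F G : List α → α → List α → ℂ) (w : List α) :
    splitSum (fun g y r => F g y r + G g y r) w = splitSum F w + splitSum G w := by
  induction w generalizing F G with
  | nil => simp [splitSum]
  | cons x l ih => simp only [splitSum, ih]; ring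

lemma splitSum_mul (c : ℂ) (F : List α → α → List α → ℂ) (w : List α) :
    splitSum (fun g y r => c * F g y r) w = c * splitSum F w := by
  induction w generalizing F with
  | nil => simp [splitSum]
  | cons x l ih => simp only [splitSum, ih]; ring

lemma splitSum_congr (F G : List α → α → List α → ℂ) (w : List α)
    (h : ∀ g y r, w = g ++ y :: r → F g y r = G g y r) : splitSum F w = splitSum G w := by
  induction w generalizing F G with
  | nil => simp [splitSum]
  | cons x l ih =>
    simp only [splitSum]
    rw [h [] x l rfl, ih _ _ (fun g y r e => h (x :: g) y r (by simp [e]))]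

lemma splitSum_tendsto (F : ℕ → List α → α → List α → ℂ) (G : List α → α → List α → ℂ)
    (w : List α)
    (h : ∀ g y r, w = g ++ y :: r → Filter.Tendsto (fun N => F N g y r) Filter.atTop
      (nhds (G g y r))) :
    Filter.Tendsto (fun N => splitSum (F N) w) Filter.atTop (nhds (splitSum G w)) := by
  induction w generalizing F G with
  | nil => simp [splitSum]
  | cons x l ih =>
    simp only [splitSum]
    exact (h [] x l rfl).add (ih (fun N g y r => F N (x :: g) y r) _
      (fun g y r e => h (x :: g) y r (by simp [e])))

lemma splitSum_zero (w : List α) : splitSum (fun _ _ _ => 0) w = 0 := by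
  induction w with
  | nil => simp [splitSum]
  | cons x l ih => simp [splitSum, ih]

lemma splitSum_bound (C E B : ℝ) (hC : 0 ≤ C) (hE : 3 * C ≤ E) (hB : 0 ≤ B)
    (F : List α → α → List α → ℂ) (w : List α)
    (h : ∀ g y r, w = g ++ y :: r → ‖F g y r‖ ≤ B * C ^ (g.length + 1) * E ^ r.length) :
    ‖splitSum F w‖ ≤ B * E ^ w.length / 2 := by
  induction w generalizing F B with
  | nil => simp only [splitSum, norm_zero, List.length_nil, pow_zero, mul_one]; positivity
  | cons x l ih =>
    simp only [splitSum]
    have h1 := h [] x l rfl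
    have h2 := ih (B * C) (by positivity) (fun g y r => F (x :: g) y r)
      (fun g y r e => (h (x :: g) y r (by simp [e])).trans (le_of_eq (by rw [List.length_cons]; ring)))
    have h3 : 0 ≤ B * E ^ l.length := by
      have : 0 ≤ E := by linarith
      positivity
    refine (norm_add_le _ _).trans ?_
    simp only [List.length_nil, zero_add, pow_one, List.length_cons] at *
    rw [pow_succ E]
    nlinarith

/-- The block decomposition of the Fock expansion. -/
lemma Fk_stack (ε : ℂ) (hε : ε * ε = ε) (L : List α → ℂ) (w : List α) (t : List (List α))
    (u : List α) (s : List (List α)) :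
    Fk ε L w (t ++ u :: s) = splitSum (fun g x r =>
      (if t = [] ∧ g = [] then 1 else ε) * Fk ε L g t *
        (Fk ε L r ((u ++ [x]) :: s) + annC ε s * L (u ++ [x]) * Fk ε L r s)) w := by
  induction w generalizing t u s with
  | nil => cases t <;> simp [Fk, splitSum]
  | cons y w ih =>
    cases t with
    | nil =>
      have h1 := ih [[y]] u s
      have h2 := ih [] u s
      simp only [List.nil_append, List.cons_append] at h1 h2
      simp only [List.nil_append, Fk, splitSum]
      rw [h1, h2]
      rw [splitSum_congr (fun g x r => (if True ∧ y :: g = [] then 1 else ε) *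
          (Fk ε L g [[y]] + L [y] * Fk ε L g []) * (Fk ε L r ((u ++ [x]) :: s) +
            annC ε s * L (u ++ [x]) * Fk ε L r s))
        (fun g x r => (if [[y]] = [] ∧ g = [] then 1 else ε) * Fk ε L g [[y]] *
          (Fk ε L r ((u ++ [x]) :: s) + annC ε s * L (u ++ [x]) * Fk ε L r s) +
          ε * L [y] * ((if ([] : List (List α)) = [] ∧ g = [] then 1 else ε) * Fk ε L g [] *
          (Fk ε L r ((u ++ [x]) :: s) + annC ε s * L (u ++ [x]) * Fk ε L r s)))]
      · rw [splitSum_add, splitSum_mul]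
        simp
        ring
      · intro g x r _
        by_cases hg : g = []
        · simp [hg]; ring
        · simp only [hg, List.cons_ne_nil, and_false, if_false]
          linear_combination (-1 : ℂ) * L [y] * Fk ε L g [] * (Fk ε L r ((u ++ [x]) :: s) +
            annC ε s * L (u ++ [x]) * Fk ε L r s) * hε
    | cons v t =>
      have h1 := ih ([y] :: v :: t) u s
      have h2 := ih (v :: t) u s
      have h3 := ih ((v ++ [y]) :: t) u s
      have h4 := ih t u s
      have hne : annC ε (t ++ u :: s) = ε := by simp [annC]
      simp only [List.cons_append] at h1 h2 h3 h4
      simp only [List.cons_append, Fk, splitSum]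
      rw [h1, h2, h3, h4, hne]
      rw [← splitSum_mul, ← splitSum_mul, ← splitSum_add, ← splitSum_add, ← splitSum_add]
      simp only [List.cons_ne_nil, false_and, and_false, if_false, mul_zero, zero_mul, zero_add]
      apply splitSum_congr
      intro g x r _
      have hk : ε * (if t = [] ∧ g = [] then 1 else ε) = ε * annC ε t := by
        unfold annC
        by_cases ht : t = [] <;> by_cases hg : g = [] <;> simp [ht, hg, hε]
      linear_combination L (v ++ [y]) * Fk ε L g t * (Fk ε L r ((u ++ [x]) :: s) +
            annC ε s * L (u ++ [x]) * Fk ε L r s) * hk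

lemma Kf_nil (ε : ℂ) (L : List α → ℂ) (u : List α) : Kf ε L u [] = L u := by
  simp [Kf, Fk]

lemma Fk_cons_eq_Kf (ε : ℂ) (L : List α → ℂ) (x : α) (w : List α) :
    Fk ε L (x :: w) [] = Kf ε L [x] w := by
  simp [Kf, Fk]

lemma Kf_cons (ε : ℂ) (hε : ε * ε = ε) (L : List α → ℂ) (u : List α) (x : α) (w : List α) :
    Kf ε L u (x :: w) = L u * Fk ε L (x :: w) [] + Kf ε L (u ++ [x]) w
      + ε * splitSum (fun g y r => Fk ε L (x :: g) [] * Kf ε L (u ++ [y]) r) w := by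
  have h := Fk_stack ε hε L (x :: w) [] u []
  simp only [List.nil_append] at h
  unfold Kf
  rw [h, splitSum, ← splitSum_mul]
  have e : splitSum (fun g y r => (if True ∧ x :: g = [] then 1 else ε) * Fk ε L (x :: g) [] *
      (Fk ε L r [u ++ [y]] + annC ε ([] : List (List α)) * L (u ++ [y]) * Fk ε L r [])) w =
      splitSum (fun g y r => ε * (Fk ε L (x :: g) [] * (Fk ε L r [u ++ [y]] +
        L (u ++ [y]) * Fk ε L r []))) w := by
    apply splitSum_congr
    intro g y r _
    simp [annC]
    ring
  rw [e]
  simp only [annC, if_true, true_and, one_mul]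
  simp only [Fk]
  ring

lemma Kf_ind (P : List α → List α → Prop) (h1 : ∀ x w, P [x] w)
    (h2 : ∀ u, u ≠ [] → ∀ x w, (∀ w', P u w') →
      (∀ g y r, w = g ++ y :: r → P (u ++ [y]) r) → P (u ++ [x]) w) :
    ∀ u, u ≠ [] → ∀ w, P u w := by
  intro u
  induction u using List.reverseRecOn with
  | nil => intro h; exact absurd rfl h
  | append_singleton u x ih =>
    intro _
    by_cases hu : u = []
    · subst hu; exact h1 x
    · have key : ∀ n : ℕ, ∀ w : List α, w.length = n → ∀ x, P (u ++ [x]) w := by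
        intro n
        induction n using Nat.strong_induction_on with
        | _ n ihn =>
          intro w hw x
          refine h2 u hu x w (ih hu) ?_
          intro g y r e
          refine ihn r.length ?_ r rfl y
          rw [← hw, e]; simp; omega
      intro w
      exact key _ w rfl x

lemma Fk_tendsto (ε : ℂ) (Ls : ℕ → List α → ℂ) (L : List α → ℂ)
    (h : ∀ u, u ≠ [] → Filter.Tendsto (fun N => Ls N u) Filter.atTop (nhds (L u)))
    (w : List α) (s : List (List α)) :
    Filter.Tendsto (fun N => Fk ε (Ls N) w s) Filter.atTop (nhds (Fk ε L w s)) := by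
  induction w generalizing s with
  | nil => cases s <;> simp [Fk]
  | cons x w ih =>
    cases s with
    | nil =>
      simp only [Fk]
      exact (ih _).add ((h _ (by simp)).mul (ih _))
    | cons u s =>
      simp only [Fk]
      exact (((ih _).add (((h _ (by simp)).const_mul _).mul (ih _))).add (ih _)).add
        (((h _ (by simp)).const_mul _).mul (ih _))

lemma splitSum_tendsto_ex (F : ℕ → List α → α → List α → ℂ) (w : List α)
    (h : ∀ g y r, w = g ++ y :: r → ∃ c, Filter.Tendsto (fun N => F N g y r) Filter.atTop
      (nhds c)) :
    ∃ c, Filter.Tendsto (fun N => splitSum (F N) w) Filter.atTop (nhds c) := by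
  induction w generalizing F with
  | nil => exact ⟨0, by simp [splitSum]⟩
  | cons x l ih =>
    simp only [splitSum]
    obtain ⟨a, ha⟩ := h [] x l rfl
    obtain ⟨b, hb⟩ := ih (fun N g y r => F N (x :: g) y r)
      (fun g y r e => h (x :: g) y r (by simp [e]))
    exact ⟨a + b, ha.add hb⟩

lemma Kf_append (ε : ℂ) (hε : ε * ε = ε) (L : List α → ℂ) (u : List α) (x : α) (w : List α) :
    Kf ε L (u ++ [x]) w = Kf ε L u (x :: w) - Kf ε L u [] * Fk ε L (x :: w) []
      - ε * splitSum (fun g y r => Fk ε L (x :: g) [] * Kf ε L (u ++ [y]) r) w := by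
  rw [Kf_cons ε hε, Kf_nil]; ring

lemma L_tendsto_of_Fk (ε : ℂ) (hε : ε * ε = ε) (Ls : ℕ → List α → ℂ) (M : List α → ℂ)
    (h : ∀ w, Filter.Tendsto (fun N => Fk ε (Ls N) w []) Filter.atTop (nhds (M w))) :
    ∃ L : List α → ℂ, ∀ u, u ≠ [] →
      Filter.Tendsto (fun N => Ls N u) Filter.atTop (nhds (L u)) := by
  have key : ∀ u, u ≠ [] → ∀ w, ∃ c,
      Filter.Tendsto (fun N => Kf ε (Ls N) u w) Filter.atTop (nhds c) := by
    apply Kf_ind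
    · intro x w
      refine ⟨M (x :: w), ?_⟩
      simpa only [← Fk_cons_eq_Kf] using h (x :: w)
    · intro u hu x w hA hB
      obtain ⟨a, ha⟩ := hA (x :: w)
      obtain ⟨b, hb⟩ := hA []
      obtain ⟨c, hc⟩ := splitSum_tendsto_ex
        (fun N g y r => Fk ε (Ls N) (x :: g) [] * Kf ε (Ls N) (u ++ [y]) r) w (by
          intro g y r e
          obtain ⟨d, hd⟩ := hB g y r e
          exact ⟨_, (h (x :: g)).mul hd⟩)
      refine ⟨_, ((ha.sub (hb.mul (h (x :: w)))).sub (hc.const_mul ε)).congr ?_⟩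
      intro N
      exact (Kf_append ε hε (Ls N) u x w).symm
  have k2 : ∀ u : List α, ∃ c, u ≠ [] →
      Filter.Tendsto (fun N => Ls N u) Filter.atTop (nhds c) := by
    intro u
    by_cases hu : u = []
    · exact ⟨0, fun h => absurd hu h⟩
    · obtain ⟨c, hc⟩ := key u hu []
      simp only [Kf_nil] at hc
      exact ⟨c, fun _ => hc⟩
  choose L hL using k2
  exact ⟨L, hL⟩

lemma tendsto_zero_of_scaled (p : ℕ → ℕ) (hp : Filter.Tendsto p Filter.atTop Filter.atTop)
    (hp0 : ∀ N, 0 < p N) (f : ℕ → ℂ) (c : ℂ)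
    (h : Filter.Tendsto (fun N => (p N : ℂ) * f N) Filter.atTop (nhds c)) :
    Filter.Tendsto f Filter.atTop (nhds 0) := by
  have h1 : Filter.Tendsto (fun N => ((p N : ℂ))⁻¹) Filter.atTop (nhds 0) :=
    (tendsto_inv_atTop_nhds_zero_nat (𝕜 := ℂ)).comp hp
  have h2 := h1.mul h
  rw [zero_mul] at h2
  refine h2.congr fun N => ?_
  have : (p N : ℂ) ≠ 0 := by exact_mod_cast (hp0 N).ne'
  field_simp

/-- scaled limits: from moments to cumulants -/
lemma scaled_L_of_Fk (ε : ℂ) (hε : ε * ε = ε) (p : ℕ → ℕ)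
    (hp : Filter.Tendsto p Filter.atTop Filter.atTop) (hp0 : ∀ N, 0 < p N)
    (Ls : ℕ → List α → ℂ) (L : List α → ℂ)
    (h : ∀ w, w ≠ [] → Filter.Tendsto (fun N => (p N : ℂ) * Fk ε (Ls N) w [])
      Filter.atTop (nhds (L w))) :
    ∀ u, u ≠ [] → Filter.Tendsto (fun N => (p N : ℂ) * Ls N u) Filter.atTop (nhds (L u)) := by
  have key : ∀ u, u ≠ [] → ∀ w,
      Filter.Tendsto (fun N => (p N : ℂ) * Kf ε (Ls N) u w) Filter.atTop
        (nhds (L (u ++ w))) := by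
    apply Kf_ind
    · intro x w
      simpa only [← Fk_cons_eq_Kf, List.singleton_append] using h (x :: w) (by simp)
    · intro u hu x w hA hB
      have h0 : ∀ g, Filter.Tendsto (fun N => Fk ε (Ls N) (x :: g) []) Filter.atTop (nhds 0) :=
        fun g => tendsto_zero_of_scaled p hp hp0 _ _ (h (x :: g) (by simp))
      have hc := splitSum_tendsto
        (fun N g y r => Fk ε (Ls N) (x :: g) [] * ((p N : ℂ) * Kf ε (Ls N) (u ++ [y]) r))
        (fun _ _ _ => 0) w (by
          intro g y r e
          simpa using (h0 g).mul (hB g y r e))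
      rw [splitSum_zero] at hc
      have := (((hA (x :: w)).sub ((hA []).mul (h0 w))).sub (hc.const_mul ε))
      simp only [mul_zero, sub_zero] at this
      rw [List.append_assoc, List.singleton_append]
      refine this.congr fun N => ?_
      rw [Kf_append ε hε (Ls N) u x w]
      have e : splitSum (fun g y r => Fk ε (Ls N) (x :: g) [] *
          ((p N : ℂ) * Kf ε (Ls N) (u ++ [y]) r)) w = (p N : ℂ) *
          splitSum (fun g y r => Fk ε (Ls N) (x :: g) [] * Kf ε (Ls N) (u ++ [y]) r) w := by
        rw [← splitSum_mul]
        apply splitSum_congr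
        intros; ring
      rw [e]; ring
  intro u hu
  simpa only [Kf_nil, List.append_nil] using key u hu []

/-- scaled limits: from cumulants to moments -/
lemma scaled_Fk_of_L (ε : ℂ) (hε : ε * ε = ε) (p : ℕ → ℕ)
    (hp : Filter.Tendsto p Filter.atTop Filter.atTop) (hp0 : ∀ N, 0 < p N)
    (Ls : ℕ → List α → ℂ) (L : List α → ℂ)
    (h : ∀ u, u ≠ [] → Filter.Tendsto (fun N => (p N : ℂ) * Ls N u) Filter.atTop
      (nhds (L u))) :
    ∀ w, w ≠ [] → Filter.Tendsto (fun N => (p N : ℂ) * Fk ε (Ls N) w [])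
      Filter.atTop (nhds (L w)) := by
  have key : ∀ n : ℕ, ∀ w : List α, w.length = n → ∀ u, u ≠ [] →
      Filter.Tendsto (fun N => (p N : ℂ) * Kf ε (Ls N) u w) Filter.atTop
        (nhds (L (u ++ w))) := by
    intro n
    induction n using Nat.strong_induction_on with
    | _ n ih =>
      intro w hw u hu
      cases w with
      | nil => simpa only [Kf_nil, List.append_nil] using h u hu
      | cons x w =>
        have h0 : ∀ g : List α, g.length ≤ w.length →
            Filter.Tendsto (fun N => Fk ε (Ls N) (x :: g) []) Filter.atTop (nhds 0) := by
          intro g hg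
          simp only [List.length_cons] at hw
          have := ih g.length (by omega) g rfl [x] (by simp)
          simp only [← Fk_cons_eq_Kf] at this
          exact tendsto_zero_of_scaled p hp hp0 _ _ this
        have hc := splitSum_tendsto
          (fun N g y r => Fk ε (Ls N) (x :: g) [] * ((p N : ℂ) * Kf ε (Ls N) (u ++ [y]) r))
          (fun _ _ _ => 0) w (by
            intro g y r e
            have hl : w.length = g.length + (r.length + 1) := by rw [e]; simp
            simp only [List.length_cons] at hw
            simpa using (h0 g (by omega)).mul
              (ih r.length (by omega) r rfl (u ++ [y]) (by simp)))
        rw [splitSum_zero] at hc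
        have h1 := ih w.length (by simp only [List.length_cons] at hw; omega) w rfl
          (u ++ [x]) (by simp)
        have := (((h u hu).mul (h0 w le_rfl)).add h1).add (hc.const_mul ε)
        simp only [mul_zero, add_zero, zero_add] at this
        rw [List.append_assoc, List.singleton_append] at this
        refine this.congr fun N => ?_
        rw [Kf_cons ε hε (Ls N) u x w]
        have e : splitSum (fun g y r => Fk ε (Ls N) (x :: g) [] *
            ((p N : ℂ) * Kf ε (Ls N) (u ++ [y]) r)) w = (p N : ℂ) *
            splitSum (fun g y r => Fk ε (Ls N) (x :: g) [] * Kf ε (Ls N) (u ++ [y]) r) w := by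
          rw [← splitSum_mul]
          apply splitSum_congr
          intros; ring
        rw [e]; ring
  intro w hw
  cases w with
  | nil => exact absurd rfl hw
  | cons x w => simpa only [← Fk_cons_eq_Kf, List.singleton_append] using key _ w rfl [x] (by simp)

/-- geometric bounds: from moments to cumulants -/
lemma L_bound_of_Fk (ε : ℂ) (hε : ε * ε = ε) (hε1 : ‖ε‖ ≤ 1) (L : List α → ℂ) (C : ℝ)
    (hC : 0 ≤ C)
    (h : ∀ w, ‖Fk ε L w []‖ ≤ C ^ w.length) :
    ∀ u, u ≠ [] → ‖L u‖ ≤ (12 * C) ^ u.length := by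
  have key : ∀ u, u ≠ [] → ∀ w, ‖Kf ε L u w‖ ≤ (12 * C) ^ u.length * (3 * C) ^ w.length := by
    apply Kf_ind
    · intro x w
      rw [← Fk_cons_eq_Kf]
      refine (h _).trans ?_
      rw [List.length_cons, List.length_singleton, pow_one, pow_succ, mul_comm]
      have : C ^ w.length ≤ (3 * C) ^ w.length := by
        apply pow_le_pow_left₀ hC; linarith
      have : 0 ≤ C ^ w.length := by positivity
      apply mul_le_mul <;> first | assumption | positivity | linarith
    · intro u hu x w hA hB
      rw [Kf_append ε hε L u x w]
      have h1 := hA (x :: w)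
      have h2 := hA []
      have h3 := h (x :: w)
      have h4 := splitSum_bound C (3 * C) ((12 * C) ^ (u.length + 1)) hC le_rfl (by positivity)
        (fun g y r => Fk ε L (x :: g) [] * Kf ε L (u ++ [y]) r) w (by
          intro g y r e
          rw [norm_mul]
          calc _ ≤ C ^ (x :: g).length * ((12 * C) ^ (u ++ [y]).length * (3 * C) ^ r.length) := by
                gcongr
                · exact h _
                · exact hB g y r e
            _ = _ := by simp only [List.length_cons, List.length_append, List.length_nil]; ring)
      have h5 : C ^ (w.length + 1) ≤ (3 * C) ^ (w.length + 1) := by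
        apply pow_le_pow_left₀ hC; linarith
      have h6 : ‖Kf ε L u [] * Fk ε L (x :: w) []‖ ≤
          (12 * C) ^ u.length * (3 * C) ^ (w.length + 1) := by
        rw [norm_mul]
        calc _ ≤ ((12 * C) ^ u.length * (3 * C) ^ ([] : List α).length) *
              C ^ (x :: w).length := by gcongr
          _ ≤ _ := by
            simp only [List.length_nil, pow_zero, mul_one, List.length_cons]
            gcongr
      have h7 : ‖ε * splitSum (fun g y r => Fk ε L (x :: g) [] * Kf ε L (u ++ [y]) r) w‖ ≤
          (12 * C) ^ (u.length + 1) * (3 * C) ^ w.length / 2 := by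
        rw [norm_mul]
        refine le_trans (mul_le_of_le_one_left (norm_nonneg _) hε1) h4
      refine (norm_sub_le _ _).trans ?_
      refine (add_le_add (norm_sub_le _ _) h7).trans ?_
      refine (add_le_add (add_le_add h1 h6) le_rfl).trans (le_of_eq ?_)
      simp only [List.length_cons, List.length_append, List.length_nil]
      ring
  intro u hu
  simpa [Kf_nil] using key u hu []

/-- geometric bounds: from cumulants to moments -/
lemma Fk_bound_of_L (ε : ℂ) (hε1 : ‖ε‖ ≤ 1) (L : List α → ℂ) (D : ℝ) (hD : 0 ≤ D)
    (h : ∀ u, u ≠ [] → ‖L u‖ ≤ D ^ u.length) (w : List α) (s : List (List α)) :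
    ‖Fk ε L w s‖ ≤ (4 * D) ^ w.length * D ^ s.flatten.length := by
  induction w generalizing s with
  | nil =>
    cases s with
    | nil => simp [Fk]
    | cons u s => simp only [Fk, norm_zero]; positivity
  | cons x w ih =>
    have hx : ‖L [x]‖ ≤ D := by simpa using h [x] (by simp)
    cases s with
    | nil =>
      simp only [Fk]
      refine (norm_add_le _ _).trans ?_
      rw [norm_mul]
      have a1 := ih [[x]]
      have a2 := mul_le_mul hx (ih []) (norm_nonneg _) hD
      refine (add_le_add a1 a2).trans ?_
      simp only [List.length_cons, List.flatten_cons, List.flatten_nil, List.append_nil,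
        List.length_nil, pow_succ, pow_zero]
      have : 0 ≤ (4 * D) ^ w.length * D := by positivity
      nlinarith
    | cons u s =>
      simp only [Fk]
      have a1 := ih ([x] :: u :: s)
      have a2 := mul_le_mul hx (ih (u :: s)) (norm_nonneg _) hD
      have a3 := ih ((u ++ [x]) :: s)
      have a4 := mul_le_mul (h (u ++ [x]) (by simp)) (ih s) (norm_nonneg _) (by positivity)
      have hc : ‖annC ε s‖ ≤ 1 := by
        unfold annC; split_ifs <;> simp [hε1]
      have b2 : ‖ε * L [x] * Fk ε L w (u :: s)‖ ≤ ‖L [x]‖ * ‖Fk ε L w (u :: s)‖ := by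
        rw [mul_assoc, norm_mul, norm_mul]
        exact mul_le_of_le_one_left (by positivity) hε1
      have b4 : ‖annC ε s * L (u ++ [x]) * Fk ε L w s‖ ≤ ‖L (u ++ [x])‖ * ‖Fk ε L w s‖ := by
        rw [mul_assoc, norm_mul, norm_mul]
        exact mul_le_of_le_one_left (by positivity) hc
      refine (norm_add_le _ _).trans ((add_le_add ((norm_add_le _ _).trans
        (add_le_add ((norm_add_le _ _).trans (add_le_add a1 (b2.trans a2))) a3))
        (b4.trans a4)).trans (le_of_eq ?_))
      simp only [List.length_cons, List.flatten_cons, List.length_append,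
        List.length_nil, pow_succ, pow_zero, pow_add]
      ring

end ListFock

section Kernels

/-- sesquilinear form attached to a kernel -/
noncomputable def gform {S : Type*} (K : S → S → ℂ) (a b : S →₀ ℂ) : ℂ :=
  a.sum fun s x => b.sum fun t y => star x * K s t * y

/-- positive semidefinite kernels -/
def PSDK {S : Type*} (K : S → S → ℂ) : Prop :=
  (∀ s t, star (K s t) = K t s) ∧ ∀ a, 0 ≤ gform K a a

variable {S T : Type*} (K : S → S → ℂ)

lemma gform_add_left (a a' b : S →₀ ℂ) : gform K (a + a') b = gform K a b + gform K a' b := by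
  unfold gform
  apply Finsupp.sum_add_index'
  · intro s; simp
  · intro s x y; simp [Finsupp.sum, ← Finset.sum_add_distrib]
    apply Finset.sum_congr rfl; intros; ring

lemma gform_add_right (a b b' : S →₀ ℂ) : gform K a (b + b') = gform K a b + gform K a b' := by
  unfold gform
  rw [← Finsupp.sum_add]
  congr 1
  ext s x
  apply Finsupp.sum_add_index'
  · intro s; simp
  · intro s x y; ring

lemma gform_smul_right (c : ℂ) (a b : S →₀ ℂ) : gform K a (c • b) = c * gform K a b := by
  unfold gform
  simp only [Finsupp.sum]
  rw [Finset.mul_sum]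
  apply Finset.sum_congr rfl
  intro s _
  by_cases hc : c = 0
  · simp [hc]
  rw [Finsupp.support_smul_eq hc, Finset.mul_sum]
  apply Finset.sum_congr rfl
  intro t _
  simp; ring

lemma gform_smul_left (c : ℂ) (a b : S →₀ ℂ) : gform K (c • a) b = star c * gform K a b := by
  unfold gform
  simp only [Finsupp.sum]
  by_cases hc : c = 0
  · simp [hc]
  rw [Finsupp.support_smul_eq hc, Finset.mul_sum]
  apply Finset.sum_congr rfl
  intro s _
  rw [Finset.mul_sum]
  apply Finset.sum_congr rfl
  intro t _
  simp; ring

@[simp] lemma gform_zero_left (b : S →₀ ℂ) : gform K 0 b = 0 := by simp [gform]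
@[simp] lemma gform_zero_right (b : S →₀ ℂ) : gform K b 0 = 0 := by simp [gform]

@[simp] lemma gform_single (s t : S) (x y : ℂ) :
    gform K (Finsupp.single s x) (Finsupp.single t y) = star x * K s t * y := by
  simp [gform]

/-- the form as a linear map on the right -/
noncomputable def gformR (a : S →₀ ℂ) : (S →₀ ℂ) →ₗ[ℂ] ℂ where
  toFun b := gform K a b
  map_add' := gform_add_right K a
  map_smul' c b := by simp [gform_smul_right]

lemma gform_symm (h : ∀ s t, star (K s t) = K t s) (a b : S →₀ ℂ) :
    star (gform K a b) = gform K b a := by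
  induction a using Finsupp.induction_linear with
  | zero => simp
  | add f g hf hg => rw [gform_add_left, gform_add_right, star_add, hf, hg]
  | single s x =>
    induction b using Finsupp.induction_linear with
    | zero => simp
    | add f g hf hg => rw [gform_add_left, gform_add_right, star_add, hf, hg]
    | single t y =>
      rw [gform_single, gform_single, star_mul, star_mul, h, star_star]; ring

lemma gform_ext_sym (A : (S →₀ ℂ) →ₗ[ℂ] (S →₀ ℂ))
    (h : ∀ s t, gform K (A (Finsupp.single s 1)) (Finsupp.single t 1) =
      gform K (Finsupp.single s 1) (A (Finsupp.single t 1))) (a b : S →₀ ℂ) :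
    gform K (A a) b = gform K a (A b) := by
  induction a using Finsupp.induction_linear with
  | zero => simp
  | add f g hf hg => rw [gform_add_left, map_add, gform_add_left, hf, hg]
  | single s x =>
    induction b using Finsupp.induction_linear with
    | zero => simp
    | add f g hf hg => rw [gform_add_right, map_add, gform_add_right, hf, hg]
    | single t y =>
      have e1 : Finsupp.single s x = x • Finsupp.single s (1:ℂ) := by simp
      have e2 : Finsupp.single t y = y • Finsupp.single t (1:ℂ) := by simp
      rw [e1, e2, map_smul, map_smul, gform_smul_left, gform_smul_left, gform_smul_right,
        gform_smul_right, h]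

/-- linear extension -/
noncomputable def lext (vec : T → (S →₀ ℂ)) : (T →₀ ℂ) →ₗ[ℂ] (S →₀ ℂ) :=
  Finsupp.linearCombination ℂ vec

@[simp] lemma lext_single (vec : T → (S →₀ ℂ)) (t : T) :
    lext vec (Finsupp.single t 1) = vec t := by simp [lext]

lemma gform_pull (vec : T → (S →₀ ℂ)) (a b : T →₀ ℂ) :
    gform (fun u v => gform K (vec u) (vec v)) a b = gform K (lext vec a) (lext vec b) := by
  induction a using Finsupp.induction_linear with
  | zero => simp
  | add f g hf hg => rw [gform_add_left, map_add, gform_add_left, hf, hg]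
  | single s x =>
    induction b using Finsupp.induction_linear with
    | zero => simp
    | add f g hf hg => rw [gform_add_right, map_add, gform_add_right, hf, hg]
    | single t y =>
      have e1 : Finsupp.single s x = x • Finsupp.single s (1:ℂ) := by simp
      have e2 : Finsupp.single t y = y • Finsupp.single t (1:ℂ) := by simp
      rw [gform_single, e1, e2, map_smul, map_smul, lext_single, lext_single,
        gform_smul_left, gform_smul_right]
      ring

variable {K}

lemma PSDK.pull (h : PSDK K) (vec : T → (S →₀ ℂ)) :
    PSDK (fun u v => gform K (vec u) (vec v)) :=
  ⟨fun s t => gform_symm K h.1 _ _, fun a => by rw [gform_pull]; exact h.2 _⟩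

lemma PSDK.comp (h : PSDK K) (f : T → S) : PSDK (fun u v => K (f u) (f v)) := by
  have := h.pull (fun t => Finsupp.single (f t) 1)
  simpa using this

lemma PSDK.toMatrix (h : PSDK K) : (Matrix.of K).PosSemidef := by
  refine ⟨?_, fun a => ?_⟩
  · ext i j; simp [Matrix.conjTranspose_apply]; exact h.1 _ _
  · exact h.2 a

lemma PSDK.ofMatrix (h : (Matrix.of K).PosSemidef) : PSDK K := by
  refine ⟨fun s t => ?_, fun a => h.2 a⟩
  have := congrFun (congrFun h.1 t) s
  simpa [Matrix.conjTranspose_apply] using this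

lemma PSDK.transpose (h : PSDK K) : PSDK (fun s t => K t s) :=
  PSDK.ofMatrix h.toMatrix.transpose

lemma PSDK.mul {K' : S → S → ℂ} (h : PSDK K) (h' : PSDK K') :
    PSDK (fun s t => K s t * K' s t) :=
  PSDK.ofMatrix (h.toMatrix.hadamard h'.toMatrix)

lemma PSDK.add {K' : S → S → ℂ} (h : PSDK K) (h' : PSDK K') :
    PSDK (fun s t => K s t + K' s t) :=
  PSDK.ofMatrix (h.toMatrix.add h'.toMatrix)

lemma PSDK.smul (h : PSDK K) {c : ℂ} (hc : 0 ≤ c) : PSDK (fun s t => c * K s t) :=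
  PSDK.ofMatrix (h.toMatrix.smul hc)

lemma PSDK.rankOne (e : S → ℂ) : PSDK (fun s t => star (e s) * e t) := by
  have h1 : PSDK (fun _ _ : Unit => (1:ℂ)) := by
    refine ⟨by simp, fun a => ?_⟩
    have : a = Finsupp.single () (a ()) := by ext; simp
    rw [this, gform_single]
    simpa using star_mul_self_nonneg (a ())
  have := h1.pull (fun s => Finsupp.single () (e s))
  simpa using this

lemma PSDK.of_tendsto {Ks : ℕ → S → S → ℂ} (h : ∀ N, PSDK (Ks N))
    (hl : ∀ s t, Filter.Tendsto (fun N => Ks N s t) Filter.atTop (nhds (K s t))) : PSDK K := by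
  refine ⟨fun s t => ?_, fun a => ?_⟩
  · have h1 := (hl s t).star
    simp only [(h _).1] at h1
    exact tendsto_nhds_unique h1 (hl t s)
  · have : Filter.Tendsto (fun N => gform (Ks N) a a) Filter.atTop (nhds (gform K a a)) := by
      unfold gform Finsupp.sum
      refine tendsto_finsetSum _ fun s _ => tendsto_finsetSum _ fun t _ => ?_
      exact ((hl s t).const_mul _).mul_const _
    exact ge_of_tendsto' this fun N => (h N).2 a

end Kernels

section FockPos

variable {α : Type*}

/-- nonempty words -/
abbrev NE (α : Type*) := {u : List α // u ≠ []}

/-- kernel of a functional on nonempty words -/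
def cker (L : List α → ℂ) (u v : NE α) : ℂ := L (v.1 ++ u.1.reverse)

/-- indicator of the empty stack -/
noncomputable def eSt : List (NE α) → ℂ
  | [] => 1
  | _ :: _ => 0

/-- the kernel of top blocks -/
noncomputable def topK (L : List α → ℂ) : List (NE α) → List (NE α) → ℂ
  | u :: _, v :: _ => cker L u v
  | _, _ => 0

/-- kernel on stacks -/
noncomputable def Kst (ε : ℂ) (L : List α → ℂ) : List (NE α) → List (NE α) → ℂ
  | [], [] => 1
  | [], _ :: _ => 0
  | _ :: _, [] => 0
  | u :: s, v :: t => cker L u v * (ε * Kst ε L s t + (1 - ε) * (eSt s * eSt t))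

/-- truncated kernel on stacks -/
noncomputable def Km (ε : ℂ) (L : List α → ℂ) : ℕ → List (NE α) → List (NE α) → ℂ
  | 0, s, t => eSt s * eSt t
  | m + 1, s, t => eSt s * eSt t + topK L s t *
      (ε * Km ε L m s.tail t.tail + (1 - ε) * (eSt s.tail * eSt t.tail))

lemma star_eSt (s : List (NE α)) : star (eSt s) = eSt s := by cases s <;> simp [eSt]

lemma eSt_psd : PSDK (fun s t : List (NE α) => eSt s * eSt t) := by
  have := PSDK.rankOne (eSt : List (NE α) → ℂ)
  simpa only [star_eSt] using this

lemma topK_psd (L : List α → ℂ) (hL : PSDK (cker L)) : PSDK (topK L) := by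
  have := hL.pull (fun s : List (NE α) => match s with
    | [] => 0
    | u :: _ => Finsupp.single u 1)
  convert this using 3 with s t
  cases s <;> cases t <;> simp [topK]

lemma Km_psd (ε : ℂ) (h0 : 0 ≤ ε) (h1 : ε ≤ 1) (L : List α → ℂ) (hL : PSDK (cker L)) (m : ℕ) :
    PSDK (Km ε L m) := by
  induction m with
  | zero => exact eSt_psd
  | succ m ih =>
    exact eSt_psd.add ((topK_psd L hL).mul (((ih.comp List.tail).smul h0).add
      (((eSt_psd (α := α)).comp List.tail).smul (sub_nonneg.2 h1))))

lemma Km_eq (ε : ℂ) (L : List α → ℂ) (m : ℕ) (s t : List (NE α)) (hs : s.length ≤ m) :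
    Km ε L m s t = Kst ε L s t := by
  induction m generalizing s t with
  | zero =>
    have : s = [] := by simpa using hs
    subst this
    cases t <;> simp [Km, Kst, eSt]
  | succ m ih =>
    cases s with
    | nil => cases t <;> simp [Km, Kst, eSt, topK]
    | cons u s =>
      cases t with
      | nil => simp [Km, Kst, eSt, topK]
      | cons v t =>
        simp only [Km, Kst, eSt, topK, List.tail]
        rw [ih s t (by simpa using hs)]
        ring

lemma Kst_psd (ε : ℂ) (h0 : 0 ≤ ε) (h1 : ε ≤ 1) (L : List α → ℂ) (hL : PSDK (cker L)) :
    PSDK (Kst ε L) := by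
  refine ⟨fun s t => ?_, fun a => ?_⟩
  · have := (Km_psd ε h0 h1 L hL (max s.length t.length)).1 s t
    rwa [Km_eq _ _ _ _ _ (le_max_left _ _), Km_eq _ _ _ _ _ (le_max_right _ _)] at this
  · have := (Km_psd ε h0 h1 L hL (a.support.sup List.length)).2 a
    convert this using 1
    unfold gform Finsupp.sum
    refine Finset.sum_congr rfl fun s hs => Finset.sum_congr rfl fun t _ => ?_
    simp only [Km_eq _ _ _ _ t (Finset.le_sup (f := List.length) hs)]

/-- one-letter nonempty word -/
def ne1 (x : α) : NE α := ⟨[x], by simp⟩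
/-- append a letter -/
def neA (u : NE α) (x : α) : NE α := ⟨u.1 ++ [x], by simp⟩

/-- coefficient for annihilation -/
noncomputable def annN (ε : ℂ) (s : List (NE α)) : ℂ := ε + (1 - ε) * eSt s

/-- action of a letter on stacks -/
noncomputable def act (ε : ℂ) (L : List α → ℂ) (x : α) : List (NE α) → (List (NE α) →₀ ℂ)
  | [] => Finsupp.single [ne1 x] 1 + L [x] • Finsupp.single [] 1
  | u :: s => Finsupp.single (ne1 x :: u :: s) 1 + (ε * L [x]) • Finsupp.single (u :: s) 1
      + Finsupp.single (neA u x :: s) 1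
      + (annN ε s * L (u.1 ++ [x])) • Finsupp.single s 1

lemma act_symm (ε : ℂ) (hε : ε * ε = ε) (hε' : star ε = ε) (L : List α → ℂ)
    (hH : ∀ w, w ≠ [] → star (L w) = L w.reverse) (x : α) (s t : List (NE α)) :
    gform (Kst ε L) (act ε L x s) (Finsupp.single t 1) =
      gform (Kst ε L) (Finsupp.single s 1) (act ε L x t) := by
  have hx : star (L [x]) = L [x] := by simpa using hH [x] (by simp)
  have hux : ∀ u : NE α, star (L (u.1 ++ [x])) = L (x :: u.1.reverse) := by
    intro u; simpa using hH (u.1 ++ [x]) (by simp)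
  have hann : ∀ s : List (NE α), star (annN ε s) = annN ε s := by
    intro s; simp only [annN, star_add, star_mul, star_eSt, star_sub, hε', star_one]; ring
  have hKe : ∀ t : List (NE α), Kst ε L [] t = eSt t := by intro t; cases t <;> simp [Kst, eSt]
  have hKe' : ∀ t : List (NE α), Kst ε L t [] = eSt t := by intro t; cases t <;> simp [Kst, eSt]
  have hA : ∀ s t : List (NE α), annN ε s * Kst ε L s t = ε * Kst ε L s t +
      (1 - ε) * (eSt s * eSt t) := by
    intro s t; cases s <;> cases t <;> simp [annN, Kst, eSt]
  have hB : ∀ s t : List (NE α), annN ε t * Kst ε L s t = ε * Kst ε L s t +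
      (1 - ε) * (eSt s * eSt t) := by
    intro s t; cases s <;> cases t <;> simp [annN, Kst, eSt]
  cases s with
  | nil =>
    cases t with
    | nil =>
      simp only [act, gform_add_left, gform_add_right, gform_smul_left, gform_smul_right,
        gform_single, Kst, hx]
    | cons v t =>
      simp only [act, gform_add_left, gform_add_right, gform_smul_left, gform_smul_right,
        gform_single, hx, hKe]
      have := hB [] t
      rw [hKe] at this
      simp only [Kst, eSt, hKe, star_one, cker, ne1, List.reverse_singleton]
      simp only [eSt] at this
      linear_combination - L (v.1 ++ [x]) * this
  | cons u s =>
    cases t with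
    | nil =>
      simp only [act, gform_add_left, gform_add_right, gform_smul_left, gform_smul_right,
        gform_single, hx, hKe', star_mul, hux, hann]
      have := hA s []
      rw [hKe'] at this
      simp only [Kst, eSt, hKe', star_one, cker, ne1, List.singleton_append]
      simp only [eSt] at this
      linear_combination L (x :: u.1.reverse) * this
    | cons v t =>
      simp only [act, gform_add_left, gform_add_right, gform_smul_left, gform_smul_right,
        gform_single, hx, star_mul, hux, hann, hε']
      have h1 := hA s (v :: t)
      have h2 := hB (u :: s) t
      simp only [eSt] at h1 h2
      simp only [Kst, eSt, star_one, cker, ne1, neA, List.singleton_append,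
        List.reverse_singleton, List.reverse_append, List.append_assoc] at h1 h2 ⊢
      linear_combination L (x :: u.1.reverse) * h1 - L (v.1 ++ [x]) * h2

/-- linear operator of a letter -/
noncomputable def opR (ε : ℂ) (L : List α → ℂ) (x : α) :
    (List (NE α) →₀ ℂ) →ₗ[ℂ] (List (NE α) →₀ ℂ) := lext (act ε L x)

/-- linear operator of a word -/
noncomputable def opW (ε : ℂ) (L : List α → ℂ) :
    List α → (List (NE α) →₀ ℂ) →ₗ[ℂ] (List (NE α) →₀ ℂ)
  | [] => LinearMap.id
  | x :: w => opW ε L w ∘ₗ opR ε L x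

lemma opW_append (ε : ℂ) (L : List α → ℂ) (u v : List α) :
    opW ε L (u ++ v) = opW ε L v ∘ₗ opW ε L u := by
  induction u with
  | nil => simp [opW]
  | cons x u ih => simp [opW, ih, LinearMap.comp_assoc]

lemma opW_vac (ε : ℂ) (L : List α → ℂ) (w : List α) (s : List (NE α)) :
    gform (Kst ε L) (Finsupp.single [] 1) (opW ε L w (Finsupp.single s 1)) =
      Fk ε L w (s.map Subtype.val) := by
  induction w generalizing s with
  | nil => cases s <;> simp [opW, Fk, Kst]
  | cons x w ih =>
    have hn : ∀ s : List (NE α), annN ε s = annC ε (s.map Subtype.val) := by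
      intro s; cases s <;> simp [annN, annC, eSt]
    cases s with
    | nil =>
      simp only [opW, opR, LinearMap.comp_apply, lext_single, act, map_add, map_smul,
        gform_add_right, gform_smul_right, ih, Fk, List.map, ne1]
    | cons u s =>
      simp only [opW, opR, LinearMap.comp_apply, lext_single, act, map_add, map_smul,
        gform_add_right, gform_smul_right, ih, Fk, List.map, ne1, neA, hn]

lemma opW_symm (ε : ℂ) (hε : ε * ε = ε) (hε' : star ε = ε) (L : List α → ℂ)
    (hH : ∀ w, w ≠ [] → star (L w) = L w.reverse) (w : List α) (a b : List (NE α) →₀ ℂ) :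
    gform (Kst ε L) (opW ε L w a) b = gform (Kst ε L) a (opW ε L w.reverse b) := by
  induction w generalizing a b with
  | nil => simp [opW]
  | cons x w ih =>
    have hs : ∀ a b, gform (Kst ε L) (opR ε L x a) b = gform (Kst ε L) a (opR ε L x b) := by
      apply gform_ext_sym
      intro s t
      rw [opR, lext_single, lext_single]
      exact act_symm ε hε hε' L hH x s t
    simp only [opW, LinearMap.comp_apply, List.reverse_cons, opW_append, LinearMap.id_apply]
    rw [ih, hs]

/-- Positivity of the moments with conditionally positive cumulants. -/
lemma Fk_psd (ε : ℂ) (hε : ε * ε = ε) (h0 : 0 ≤ ε) (h1 : ε ≤ 1) (L : List α → ℂ)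
    (hH : ∀ w, w ≠ [] → star (L w) = L w.reverse) (hL : PSDK (cker L)) :
    PSDK (fun u v : List α => Fk ε L (u.reverse ++ v) []) := by
  have hε' : star ε = ε := (IsSelfAdjoint.of_nonneg h0)
  have h := ((Kst_psd ε h0 h1 L hL).pull
    (fun u : List α => opW ε L u (Finsupp.single [] 1))).comp List.reverse
  have e : ∀ u v : List α, gform (Kst ε L) (opW ε L u (Finsupp.single [] 1))
      (opW ε L v (Finsupp.single [] 1)) = Fk ε L (v ++ u.reverse) [] := by
    intro u v
    rw [opW_symm ε hε hε' L hH, ← LinearMap.comp_apply, ← opW_append, opW_vac]; rfl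
  simp only [e, List.reverse_reverse] at h
  exact h.transpose

end FockPos

section GNS

/-- moments as a function on lists -/
noncomputable def momL {k : ℕ} (μ : Dist k) (w : List (Fin k)) : ℂ :=
  μ ((w.map (FreeAlgebra.ι ℂ)).prod)

lemma momentSeries_eq {k : ℕ} (μ : Dist k) (n : ℕ) (w : Fin (n+1) → Fin k) :
    momentSeries μ n w = momL μ (List.ofFn w) := by
  simp [momentSeries, momL, List.map_ofFn, Function.comp_def]

lemma conv_of_words {k : ℕ} (μs : ℕ → Dist k) (μ : Dist k)
    (h : ∀ w, Filter.Tendsto (fun N => momL (μs N) w) Filter.atTop (nhds (momL μ w))) :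
    ConvInMoments μs μ := by
  intro P
  have hP : P ∈ Algebra.adjoin ℂ (Set.range (FreeAlgebra.ι ℂ : Fin k → _)) := by
    rw [FreeAlgebra.adjoin_range_ι]; trivial
  rw [← Subalgebra.mem_toSubmodule, Algebra.adjoin_eq_span] at hP
  induction hP using Submodule.span_induction with
  | mem x hx =>
    obtain ⟨l, hl, rfl⟩ := Submonoid.exists_list_of_mem_closure hx
    have : ∃ w : List (Fin k), w.map (FreeAlgebra.ι ℂ) = l := by
      clear hx
      induction l with
      | nil => exact ⟨[], rfl⟩
      | cons a l ih =>
        obtain ⟨w, hw⟩ := ih (fun y hy => hl y (by simp [hy]))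
        obtain ⟨i, hi⟩ := hl a (by simp)
        exact ⟨i :: w, by simp [hw, hi]⟩
    obtain ⟨w, rfl⟩ := this
    exact h w
  | zero => simp
  | add x y _ _ hx hy => simpa using hx.add hy
  | smul c x _ hx => simpa using hx.const_mul c

lemma bounded_of_growth {E : Type*} [SeminormedAddCommGroup E] [InnerProductSpace ℂ E]
    (X : E →ₗ[ℂ] E) (hX : ∀ a b, inner ℂ (X a) b = inner ℂ a (X b)) (C : ℝ) (hC : 0 < C)
    (hg : ∀ a, ∃ D : ℝ, ∀ n : ℕ, ‖(X ^ n) a‖ ≤ D * C ^ n) (a : E) : ‖X a‖ ≤ C * ‖a‖ := by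
  have hconv : ∀ n, ‖(X ^ (n+1)) a‖ ^ 2 ≤ ‖(X ^ n) a‖ * ‖(X ^ (n+2)) a‖ := by
    intro n
    have e1 : ‖(X ^ (n+1)) a‖ ^ 2 = ‖(inner ℂ ((X ^ n) a) ((X ^ (n+2)) a) : ℂ)‖ := by
      have : (inner ℂ ((X ^ n) a) ((X ^ (n+2)) a) : ℂ) =
          inner ℂ ((X ^ (n+1)) a) ((X ^ (n+1)) a) := by
        rw [show n + 2 = (n+1)+1 from rfl, pow_succ' X (n+1), Module.End.mul_apply, ← hX,
          ← Module.End.mul_apply, ← pow_succ']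
      rw [this, inner_self_eq_norm_sq_to_K]
      simp
    rw [e1]
    exact norm_inner_le_norm _ _
  by_contra hlt
  push Not at hlt
  have hb0 : 0 < ‖a‖ := by
    rcases (norm_nonneg a).lt_or_eq with h | h
    · exact h
    · have := hconv 0
      simp only [pow_zero, Module.End.one_apply, ← h, zero_mul, zero_add, pow_one] at this
      have h2 : ‖X a‖ = 0 := by
        have := norm_nonneg (X a)
        nlinarith
      rw [h2, ← h] at hlt
      simp at hlt
  set r := ‖X a‖ / ‖a‖ with hr
  have hrC : C < r := by rw [hr, lt_div_iff₀ hb0]; exact hlt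
  have hr0 : 0 < r := hC.trans hrC
  have hstep : ∀ n, 0 < ‖(X ^ n) a‖ ∧ r * ‖(X ^ n) a‖ ≤ ‖(X ^ (n+1)) a‖ := by
    intro n
    induction n with
    | zero =>
      refine ⟨by simpa using hb0, ?_⟩
      simp only [pow_zero, Module.End.one_apply, zero_add, pow_one]
      rw [hr, div_mul_cancel₀ _ hb0.ne']
    | succ n ih =>
      obtain ⟨h1, h2⟩ := ih
      have h3 : 0 < ‖(X ^ (n+1)) a‖ := lt_of_lt_of_le (by positivity) h2
      refine ⟨h3, ?_⟩
      have h4 := hconv n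
      have : r * ‖(X ^ (n+1)) a‖ * ‖(X ^ n) a‖ ≤ ‖(X ^ (n+2)) a‖ * ‖(X ^ n) a‖ := by
        nlinarith
      exact le_of_mul_le_mul_right this h1
  have hpow : ∀ n, ‖a‖ * r ^ n ≤ ‖(X ^ n) a‖ := by
    intro n
    induction n with
    | zero => simp
    | succ n ih =>
      calc ‖a‖ * r ^ (n+1) = r * (‖a‖ * r ^ n) := by ring
        _ ≤ r * ‖(X ^ n) a‖ := by gcongr
        _ ≤ _ := (hstep n).2
  obtain ⟨D, hD⟩ := hg a
  have hunb := tendsto_pow_atTop_atTop_of_one_lt ((one_lt_div hC).2 hrC)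
  obtain ⟨n, hn⟩ := (hunb.eventually (Filter.eventually_gt_atTop (D / ‖a‖))).exists
  rw [div_pow, div_lt_div_iff₀ hb0 (by positivity)] at hn
  have := hpow n
  have := hD n
  nlinarith

/-- pre-Hilbert space of a positive semidefinite kernel -/
def PreH {S : Type*} (K : S → S → ℂ) (_ : PSDK K) := S →₀ ℂ

variable {S : Type*} (K : S → S → ℂ) (hK : PSDK K)

noncomputable instance : AddCommGroup (PreH K hK) := inferInstanceAs (AddCommGroup (S →₀ ℂ))
noncomputable instance : Module ℂ (PreH K hK) := inferInstanceAs (Module ℂ (S →₀ ℂ))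

/-- the core -/
noncomputable abbrev preCore : PreInnerProductSpace.Core ℂ (PreH K hK) where
  inner a b := gform K a b
  conj_inner_symm a b := gform_symm K hK.1 b a
  re_inner_nonneg a := (Complex.nonneg_iff.1 (hK.2 a)).1
  add_left a b c := gform_add_left K a b c
  smul_left a b r := gform_smul_left K r a b

noncomputable instance : SeminormedAddCommGroup (PreH K hK) :=
  InnerProductSpace.Core.toSeminormedAddCommGroup (c := preCore K hK)
noncomputable instance : InnerProductSpace ℂ (PreH K hK) :=
  InnerProductSpace.ofCore (preCore K hK)

lemma preH_inner (a b : PreH K hK) : inner ℂ a b = gform K a b := rfl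

lemma exists_Dc {k : ℕ} (M : List (Fin k) → ℂ) (h1 : M [] = 1)
    (hM : PSDK (fun u v : List (Fin k) => M (u.reverse ++ v)))
    (C : ℝ) (hC : 0 < C) (hb : ∀ w, ‖M w‖ ≤ C ^ w.length) :
    ∃ μ : Dist k, IsDc μ ∧ ∀ w, momL μ w = M w := by
  let K : List (Fin k) → List (Fin k) → ℂ := fun u v => M (u.reverse ++ v)
  let E := PreH K hM
  let X : Fin k → E →ₗ[ℂ] E := fun i => lext (fun v => Finsupp.single (i :: v) 1)
  let sg : List (Fin k) → E := fun v => (Finsupp.single v 1 : List (Fin k) →₀ ℂ)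
  have hXs : ∀ i v, X i (sg v) = sg (i :: v) := fun i v => lext_single _ _
  have hin : ∀ u v, inner ℂ (sg u) (sg v) = M (u.reverse ++ v) := by
    intro u v
    rw [preH_inner]
    simp [sg, K]
  have hsym : ∀ i (a b : E), inner ℂ (X i a) b = inner ℂ a (X i b) := by
    intro i a b
    refine gform_ext_sym K (lext (fun v => Finsupp.single (i :: v) 1)) ?_ a b
    intro s t
    rw [lext_single, lext_single, gform_single, gform_single]
    simp [K]
  have hXn : ∀ i n v, (X i ^ n) (sg v) = sg (List.replicate n i ++ v) := by
    intro i n v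
    induction n with
    | zero => simp
    | succ n ih => rw [pow_succ', Module.End.mul_apply, ih, hXs]; rfl
  have hgr : ∀ i (a : E), ∃ D : ℝ, ∀ n : ℕ, ‖(X i ^ n) a‖ ≤ D * C ^ n := by
    intro i a
    induction a using Finsupp.induction_linear with
    | zero => exact ⟨0, fun n => by
        have : (X i ^ n) (0 : E) = 0 := map_zero _
        rw [zero_mul]
        exact (le_of_eq (by rw [show ((0 : List (Fin k) →₀ ℂ) : E) = (0 : E) from rfl, this,
          norm_zero]))⟩
    | add f g hf hg =>
      obtain ⟨D, hD⟩ := hf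
      obtain ⟨D', hD'⟩ := hg
      refine ⟨D + D', fun n => ?_⟩
      have : (X i ^ n) ((f : E) + (g : E)) = (X i ^ n) (f : E) + (X i ^ n) (g : E) := map_add _ _ _
      calc ‖(X i ^ n) ((f : E) + (g : E))‖ ≤ ‖(X i ^ n) (f : E)‖ + ‖(X i ^ n) (g : E)‖ := by
            rw [this]; exact norm_add_le _ _
        _ ≤ _ := by rw [add_mul]; exact add_le_add (hD n) (hD' n)
    | single v x =>
      refine ⟨‖x‖ * C ^ v.length, fun n => ?_⟩
      have e : (Finsupp.single v x : List (Fin k) →₀ ℂ) = (x • sg v : E) := by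
        show _ = x • (Finsupp.single v 1 : List (Fin k) →₀ ℂ)
        simp
      have e2 : (X i ^ n) (x • sg v) = x • (X i ^ n) (sg v) := map_smul _ _ _
      rw [e, e2, norm_smul, hXn, mul_assoc]
      gcongr
      rw [← sq_le_sq₀ (norm_nonneg _) (by positivity)]
      have h3 : ‖sg (List.replicate n i ++ v)‖ ^ 2 =
          ‖(inner ℂ (sg (List.replicate n i ++ v)) (sg (List.replicate n i ++ v)) : ℂ)‖ := by
        rw [inner_self_eq_norm_sq_to_K]; simp
      rw [h3, hin]
      refine (hb _).trans (le_of_eq ?_)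
      rw [← pow_add, ← pow_mul]
      congr 1
      simp; ring
  let Xc : Fin k → E →L[ℂ] E := fun i =>
    (X i).mkContinuous C (fun a => bounded_of_growth (X i) (hsym i) C hC (hgr i) a)
  let H := UniformSpace.Completion E
  let Y : Fin k → H →L[ℂ] H := fun i => (Xc i).completion
  let Ω : H := ((sg [] : E) : UniformSpace.Completion E)
  have hYs : ∀ i v, Y i ((sg v : E) : H) = ((sg (i :: v) : E) : H) := by
    intro i v
    have : (Xc i).completion ((sg v : E) : UniformSpace.Completion E) = ((Xc i (sg v) : E) : UniformSpace.Completion E) := by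
      simp
    exact this.trans (by rw [← hXs]; rfl)
  have hYw : ∀ w : List (Fin k), (w.map Y).prod Ω = ((sg w : E) : H) := by
    intro w
    induction w with
    | nil => rfl
    | cons i w ih => rw [List.map_cons, List.prod_cons, mul_apply_eq_comp, ih, hYs]
  have hsa : ∀ i, IsSelfAdjoint (Y i) := by
    intro i
    rw [ContinuousLinearMap.isSelfAdjoint_iff']
    symm
    refine (ContinuousLinearMap.eq_adjoint_iff _ _).2 fun x y => ?_
    induction x, y using UniformSpace.Completion.induction_on₂ with
    | hp => apply isClosed_eq <;> fun_prop
    | ih x y =>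
      have e1 : ∀ z : E, Y i ((z : E) : H) = ((X i z : E) : H) := by
        intro z
        have : (Xc i).completion ((z : E) : UniformSpace.Completion E) = ((Xc i z : E) : UniformSpace.Completion E) := by
          simp
        exact this
      rw [e1, e1, UniformSpace.Completion.inner_coe, UniformSpace.Completion.inner_coe]
      exact hsym i x y
  let φ : (H →L[ℂ] H) →ₗ[ℂ] ℂ :=
    { toFun := fun T => inner ℂ Ω (T Ω)
      map_add' := fun T T' => inner_add_right _ _ _
      map_smul' := fun c T => inner_smul_right _ _ _ }
  have hφ : ∀ w : List (Fin k), φ ((w.map Y).prod) = M w := by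
    intro w
    show inner ℂ Ω ((w.map Y).prod Ω) = M w
    rw [hYw, UniformSpace.Completion.inner_coe, hin]
    simp
  let μ : Dist k := φ ∘ₗ (FreeAlgebra.lift ℂ Y).toLinearMap
  have hμ : ∀ w, momL μ w = φ ((w.map Y).prod) := by
    intro w
    show φ (FreeAlgebra.lift ℂ Y ((w.map (FreeAlgebra.ι ℂ)).prod)) = _
    rw [map_list_prod, List.map_map]
    congr 3
    funext i
    simp
  refine ⟨μ, ⟨?_, H →L[ℂ] H, inferInstance, inferInstance, inferInstance, inferInstance,
    inferInstance, inferInstance, φ, Y, ?_, ?_, hsa, ?_⟩, fun w => (hμ w).trans (hφ w)⟩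
  · have := (hμ []).trans (hφ [])
    simpa [momL, IsDalg, h1] using this
  · have := hφ []
    simpa [h1] using this
  · intro T
    show 0 ≤ inner ℂ Ω ((star T * T) Ω)
    rw [mul_apply_eq_comp, ContinuousLinearMap.star_eq_adjoint,
      ContinuousLinearMap.adjoint_inner_right, inner_self_eq_norm_sq_to_K]
    have : (0:ℝ) ≤ ‖T Ω‖ ^ 2 := by positivity
    have h2 : (0:ℂ) ≤ ((‖T Ω‖ ^ 2 : ℝ) : ℂ) := Complex.zero_le_real.2 this
    simpa using h2
  · intro n w
    rw [momentSeries_eq, hμ, List.map_ofFn]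
    rfl

end GNS

section DcFacts

lemma Dc_state {A : Type} [NormedRing A] [StarRing A] [CStarRing A]
    [NormedAlgebra ℂ A] [StarModule ℂ A] [CompleteSpace A]
    (φ : A →ₗ[ℂ] ℂ) (hφ : ∀ a : A, 0 ≤ φ (star a * a)) :
    (∀ a, φ (star a) = star (φ a)) ∧ ∃ C : ℝ, ∀ a, ‖φ a‖ ≤ C * ‖a‖ := by
  let _ : CStarAlgebra A := { }
  let _ : PartialOrder A := CStarAlgebra.spectralOrder A
  let _ : StarOrderedRing A := CStarAlgebra.spectralOrderedRing A
  have hpos : ∀ a : A, 0 ≤ a → 0 ≤ φ a := by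
    intro a ha
    obtain ⟨b, rfl⟩ := CStarAlgebra.nonneg_iff_eq_star_mul_self.1 ha
    exact hφ b
  let f : A →ₚ[ℂ] ℂ := PositiveLinearMap.mk₀ φ hpos
  refine ⟨fun a => map_star f a, ?_⟩
  obtain ⟨C, hC⟩ := f.exists_norm_apply_le
  exact ⟨C, hC⟩

lemma Dc_facts {k : ℕ} (μ : Dist k) (h : IsDc μ) :
    (∃ C : ℝ, 0 < C ∧ ∀ w, ‖momL μ w‖ ≤ C ^ w.length) ∧
    (∀ w, star (momL μ w) = momL μ w.reverse) ∧
    PSDK (fun u v : List (Fin k) => momL μ (v ++ u.reverse)) := by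
  obtain ⟨h1, A, i1, i2, i3, i4, i5, i6, φ, x, hφ1, hφ, hx, hm⟩ := h
  have hw : ∀ w : List (Fin k), momL μ w = φ ((w.map x).prod) := by
    intro w
    cases w with
    | nil => simpa [momL, hφ1, IsDalg] using h1
    | cons a l =>
      have := hm l.length (fun j => (a :: l).get j)
      rw [momentSeries_eq] at this
      have e : List.ofFn (n := l.length + 1) (fun j => (a :: l).get j) = a :: l :=
        List.ofFn_get (a :: l)
      have e2 : List.ofFn (n := l.length + 1) (fun j => x ((a :: l).get j)) = (a :: l).map x := by
        conv_rhs => rw [← e, List.map_ofFn]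
        rfl
      rwa [e, e2] at this
  have hstar : ∀ w : List (Fin k), star ((w.map x).prod) = (w.reverse.map x).prod := by
    intro w
    induction w with
    | nil => simp
    | cons a l ih =>
      rw [List.map_cons, List.prod_cons, star_mul, ih, (hx a).star_eq]
      simp
  obtain ⟨hs, C, hC⟩ := Dc_state φ hφ
  have hH : ∀ w, star (momL μ w) = momL μ w.reverse := by
    intro w; rw [hw, hw, ← hs, hstar]
  refine ⟨?_, hH, ?_⟩
  · let B : ℝ := ∑ i, ‖x i‖ + 1
    have hB : ∀ i, ‖x i‖ ≤ B := fun i =>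
      (Finset.single_le_sum (f := fun i => ‖x i‖) (fun _ _ => norm_nonneg _) (mem_univ i)).trans
        (by simp [B])
    have hB1 : 1 ≤ B := by
      have : 0 ≤ ∑ i, ‖x i‖ := Finset.sum_nonneg fun _ _ => norm_nonneg _
      simp only [B]; linarith
    have hprod : ∀ w : List (Fin k), ‖(w.map x).prod‖ ≤ ‖(1:A)‖ * B ^ w.length := by
      intro w
      induction w with
      | nil => simp
      | cons a l ih =>
        rw [List.map_cons, List.prod_cons, List.length_cons]
        calc _ ≤ ‖x a‖ * ‖(l.map x).prod‖ := norm_mul_le _ _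
          _ ≤ B * (‖(1:A)‖ * B ^ l.length) := by
            gcongr
            exact hB a
          _ = _ := by ring
    let D : ℝ := max (|C| * ‖(1:A)‖) 1
    have hD1 : 1 ≤ D := le_max_right _ _
    refine ⟨D * B, by positivity, fun w => ?_⟩
    rw [hw]
    rcases Nat.eq_zero_or_pos w.length with h0 | h0
    · have : w = [] := by simpa using h0
      subst this
      simp [hφ1]
    · calc ‖φ ((w.map x).prod)‖ ≤ C * ‖(w.map x).prod‖ := hC _
        _ ≤ |C| * (‖(1:A)‖ * B ^ w.length) := by
          gcongr
          · exact le_abs_self C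
          · exact hprod w
        _ = (|C| * ‖(1:A)‖) * B ^ w.length := by ring
        _ ≤ D * B ^ w.length := by
          gcongr
          exact le_max_left _ _
        _ ≤ D ^ w.length * B ^ w.length := by
          gcongr
          exact le_self_pow₀ hD1 h0.ne'
        _ = _ := by rw [mul_pow]
  · have key : ∀ a b : List (Fin k) →₀ ℂ,
        gform (fun u v : List (Fin k) => momL μ (u.reverse ++ v)) a b =
        φ (star (Finsupp.linearCombination ℂ (fun w : List (Fin k) => (w.map x).prod) a) *
          Finsupp.linearCombination ℂ (fun w : List (Fin k) => (w.map x).prod) b) := by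
      intro a b
      induction a using Finsupp.induction_linear with
      | zero => simp
      | add f g hf hg => rw [gform_add_left, map_add, star_add, add_mul, map_add, hf, hg]
      | single s c =>
        induction b using Finsupp.induction_linear with
        | zero => simp
        | add f g hf hg => rw [gform_add_right, map_add, mul_add, map_add, hf, hg]
        | single t d =>
          rw [gform_single, Finsupp.linearCombination_single, Finsupp.linearCombination_single,
            star_smul, hstar, smul_mul_assoc, mul_smul_comm, map_smul, map_smul, ← List.prod_append,
            ← List.map_append, ← hw, smul_eq_mul, smul_eq_mul]
          ring
    have hp : PSDK (fun u v : List (Fin k) => momL μ (u.reverse ++ v)) := by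
      refine ⟨fun u v => ?_, fun a => ?_⟩
      · rw [hH]; simp
      · rw [key]; exact hφ _
    have := (hp.comp List.reverse).transpose
    simpa using this

end DcFacts

section Comb

set_option linter.unusedSectionVars false

variable {ι : Type*} [LinearOrder ι]

/-- set partitions as families of finsets -/
def IsPt (U : Finset ι) (P : Finset (Finset ι)) : Prop :=
  ∅ ∉ P ∧ (∀ B ∈ P, B ⊆ U) ∧ (∀ x ∈ U, ∃ B ∈ P, x ∈ B) ∧
    ∀ B ∈ P, ∀ C ∈ P, ∀ x, x ∈ B → x ∈ C → B = C

/-- the partitions of `U` with a property -/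
noncomputable def PtS (U : Finset ι) (p : Finset (Finset ι) → Prop) :
    Finset (Finset (Finset ι)) :=
  (U.powerset.powerset).filter (fun P => IsPt U P ∧ p P)

/-- weighted sum over partitions with a property -/
noncomputable def Zs (W : Finset ι → ℂ) (U : Finset ι) (p : Finset (Finset ι) → Prop) : ℂ :=
  ∑ P ∈ PtS U p, ∏ B ∈ P, W B

lemma mem_Zs {U : Finset ι} {p : Finset (Finset ι) → Prop} {P : Finset (Finset ι)} :
    P ∈ PtS U p ↔ IsPt U P ∧ p P := by
  simp only [PtS, Finset.mem_filter, Finset.mem_powerset, and_iff_right_iff_imp]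
  rintro ⟨h, _⟩ B hB
  exact Finset.mem_powerset.2 (h.2.1 B hB)

lemma IsPt.union {I J : Finset ι} (hIJ : Disjoint I J) {P Q : Finset (Finset ι)}
    (hP : IsPt I P) (hQ : IsPt J Q) : IsPt (I ∪ J) (P ∪ Q) := by
  refine ⟨?_, ?_, ?_, ?_⟩
  · simp [hP.1, hQ.1]
  · intro B hB
    rcases Finset.mem_union.1 hB with h | h
    · exact (hP.2.1 B h).trans Finset.subset_union_left
    · exact (hQ.2.1 B h).trans Finset.subset_union_right
  · intro x hx
    rcases Finset.mem_union.1 hx with h | h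
    · obtain ⟨B, hB, hxB⟩ := hP.2.2.1 x h
      exact ⟨B, Finset.mem_union_left _ hB, hxB⟩
    · obtain ⟨B, hB, hxB⟩ := hQ.2.2.1 x h
      exact ⟨B, Finset.mem_union_right _ hB, hxB⟩
  · intro B hB C hC x hxB hxC
    rcases Finset.mem_union.1 hB with h | h <;> rcases Finset.mem_union.1 hC with h' | h'
    · exact hP.2.2.2 B h C h' x hxB hxC
    · exact absurd (hQ.2.1 C h' hxC) (Finset.disjoint_left.1 hIJ (hP.2.1 B h hxB))
    · exact absurd (hQ.2.1 B h hxB) (Finset.disjoint_left.1 hIJ (hP.2.1 C h' hxC))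
    · exact hQ.2.2.2 B h C h' x hxB hxC

lemma IsPt.restr {U I : Finset ι} (hI : I ⊆ U) {P : Finset (Finset ι)} (hP : IsPt U P)
    (h : ∀ B ∈ P, ∀ x ∈ B, x ∈ I → B ⊆ I) : IsPt I (P.filter (fun B => B ⊆ I)) := by
  refine ⟨?_, ?_, ?_, ?_⟩
  · simp [hP.1]
  · intro B hB; exact (Finset.mem_filter.1 hB).2
  · intro x hx
    obtain ⟨B, hB, hxB⟩ := hP.2.2.1 x (hI hx)
    exact ⟨B, Finset.mem_filter.2 ⟨hB, h B hB x hxB hx⟩, hxB⟩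
  · intro B hB C hC
    exact hP.2.2.2 B (Finset.mem_filter.1 hB).1 C (Finset.mem_filter.1 hC).1

lemma Zs_split (W : Finset ι → ℂ) (I J : Finset ι) (hIJ : Disjoint I J)
    (p p1 p2 : Finset (Finset ι) → Prop)
    (h : ∀ P Q, IsPt I P → IsPt J Q → (p (P ∪ Q) ↔ p1 P ∧ p2 Q))
    (h' : ∀ P, IsPt (I ∪ J) P → p P → ∀ B ∈ P, B ⊆ I ∨ B ⊆ J) :
    Zs W (I ∪ J) p = Zs W I p1 * Zs W J p2 := by
  have hno : ∀ B : Finset ι, B ≠ ∅ → B ⊆ I → B ⊆ J → False := by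
    intro B hB h1 h2
    obtain ⟨x, hx⟩ := Finset.nonempty_iff_ne_empty.2 hB
    exact Finset.disjoint_left.1 hIJ (h1 hx) (h2 hx)
  unfold Zs
  rw [Finset.sum_mul_sum, ← Finset.sum_product']
  symm
  refine Finset.sum_bij' (fun PQ _ => PQ.1 ∪ PQ.2)
    (fun P _ => (P.filter (fun B => B ⊆ I), P.filter (fun B => B ⊆ J))) ?_ ?_ ?_ ?_ ?_
  · rintro ⟨P, Q⟩ hPQ
    obtain ⟨hP, hQ⟩ := Finset.mem_product.1 hPQ
    rw [mem_Zs] at hP hQ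
    rw [mem_Zs]
    exact ⟨hP.1.union hIJ hQ.1, (h P Q hP.1 hQ.1).2 ⟨hP.2, hQ.2⟩⟩
  · intro P hP
    rw [mem_Zs] at hP
    have hd := h' P hP.1 hP.2
    have e : P.filter (fun B => B ⊆ I) ∪ P.filter (fun B => B ⊆ J) = P := by
      ext B
      simp only [Finset.mem_union, Finset.mem_filter]
      constructor
      · rintro (h | h) <;> exact h.1
      · intro hB
        rcases hd B hB with h1 | h1
        · exact Or.inl ⟨hB, h1⟩
        · exact Or.inr ⟨hB, h1⟩
    have hP1 : IsPt I (P.filter (fun B => B ⊆ I)) := by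
      refine hP.1.restr Finset.subset_union_left fun B hB x hx hxI => ?_
      rcases hd B hB with h1 | h1
      · exact h1
      · exact absurd (h1 hx) (Finset.disjoint_left.1 hIJ hxI)
    have hP2 : IsPt J (P.filter (fun B => B ⊆ J)) := by
      refine hP.1.restr Finset.subset_union_right fun B hB x hx hxI => ?_
      rcases hd B hB with h1 | h1
      · exact absurd hxI (Finset.disjoint_left.1 hIJ (h1 hx))
      · exact h1
    have := (h _ _ hP1 hP2).1 (by rw [e]; exact hP.2)
    rw [Finset.mem_product, mem_Zs, mem_Zs]
    exact ⟨⟨hP1, this.1⟩, ⟨hP2, this.2⟩⟩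
  · rintro ⟨P, Q⟩ hPQ
    obtain ⟨hP, hQ⟩ := Finset.mem_product.1 hPQ
    rw [mem_Zs] at hP hQ
    ext B
    · simp only [Finset.mem_union, Finset.mem_filter]
      constructor
      · rintro ⟨h1 | h1, h2⟩
        · exact h1
        · exact (hno B (fun e => hQ.1.1 (e ▸ h1)) h2 (hQ.1.2.1 B h1)).elim
      · intro h1
        exact ⟨Or.inl h1, hP.1.2.1 B h1⟩
    · simp only [Finset.mem_union, Finset.mem_filter]
      constructor
      · rintro ⟨h1 | h1, h2⟩
        · exact (hno B (fun e => hP.1.1 (e ▸ h1)) (hP.1.2.1 B h1) h2).elim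
        · exact h1
      · intro h1
        exact ⟨Or.inr h1, hQ.1.2.1 B h1⟩
  · intro P hP
    rw [mem_Zs] at hP
    ext B
    simp only [Finset.mem_union, Finset.mem_filter]
    constructor
    · rintro (h | h) <;> exact h.1
    · intro hB
      rcases h' P hP.1 hP.2 B hB with h1 | h1
      · exact Or.inl ⟨hB, h1⟩
      · exact Or.inr ⟨hB, h1⟩
  · rintro ⟨P, Q⟩ hPQ
    obtain ⟨hP, hQ⟩ := Finset.mem_product.1 hPQ
    rw [mem_Zs] at hP hQ
    rw [Finset.prod_union]
    rw [Finset.disjoint_left]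
    intro B h1 h2
    exact hno B (fun e => hP.1.1 (e ▸ h1)) (hP.1.2.1 B h1) (hQ.1.2.1 B h2)

lemma Zs_congr (W : Finset ι → ℂ) (U : Finset ι) (p q : Finset (Finset ι) → Prop)
    (h : ∀ P, IsPt U P → (p P ↔ q P)) : Zs W U p = Zs W U q := by
  unfold Zs
  congr 1
  ext P
  rw [mem_Zs, mem_Zs]
  constructor
  · rintro ⟨h1, h2⟩; exact ⟨h1, (h P h1).1 h2⟩
  · rintro ⟨h1, h2⟩; exact ⟨h1, (h P h1).2 h2⟩

/-- compatibility of two blocks: noncrossing, and for `ε = 0` intervals -/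
def okB (ε : ℂ) (B C : Finset ι) : Prop :=
  (∀ i ∈ B, ∀ j ∈ C, ∀ k ∈ B, ∀ l ∈ C, i < j → j < k → k < l → False) ∧
  (ε = 0 → ∀ i ∈ B, ∀ j ∈ C, ∀ k ∈ B, i < j → j < k → False)

/-- the class of partitions -/
def Cls (ε : ℂ) (P : Finset (Finset ι)) : Prop :=
  ∀ B ∈ P, ∀ C ∈ P, B ≠ C → okB ε B C

lemma Cls_union (ε : ℂ) (P Q : Finset (Finset ι))
    (h : ∀ B ∈ P, ∀ C ∈ Q, okB ε B C ∧ okB ε C B) :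
    Cls ε (P ∪ Q) ↔ Cls ε P ∧ Cls ε Q := by
  constructor
  · intro H
    exact ⟨fun B hB C hC => H B (Finset.mem_union_left _ hB) C (Finset.mem_union_left _ hC),
      fun B hB C hC => H B (Finset.mem_union_right _ hB) C (Finset.mem_union_right _ hC)⟩
  · rintro ⟨h1, h2⟩ B hB C hC hne
    rcases Finset.mem_union.1 hB with hB | hB <;> rcases Finset.mem_union.1 hC with hC | hC
    · exact h1 B hB C hC hne
    · exact (h B hB C hC).1
    · exact (h C hC B hB).2
    · exact h2 B hB C hC hne

lemma Zs_empty (W : Finset ι → ℂ) (ε : ℂ) : Zs W ∅ (Cls ε) = 1 := by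
  unfold Zs
  have : PtS (∅ : Finset ι) (Cls ε) = {∅} := by
    ext P
    rw [mem_Zs, Finset.mem_singleton]
    constructor
    · rintro ⟨h, _⟩
      rw [Finset.eq_empty_iff_forall_notMem]
      intro B hB
      have := Finset.subset_empty.1 (h.2.1 B hB)
      exact h.1 (this ▸ hB)
    · rintro rfl
      exact ⟨⟨by simp, by simp, by simp, by simp⟩, by simp [Cls]⟩
  rw [this]; simp

lemma Zs_one (W : Finset ι → ℂ) (A : Finset ι) (hA : A.Nonempty) :
    Zs W A (fun P => A ∈ P) = W A := by
  unfold Zs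
  have : PtS A (fun P => A ∈ P) = {{A}} := by
    ext P
    rw [mem_Zs, Finset.mem_singleton]
    constructor
    · rintro ⟨h, hAP⟩
      ext B
      rw [Finset.mem_singleton]
      constructor
      · intro hB
        obtain ⟨x, hx⟩ := Finset.nonempty_iff_ne_empty.2 (fun e => h.1 (e ▸ hB) : B ≠ ∅)
        exact h.2.2.2 B hB A hAP x hx (h.2.1 B hB hx)
      · rintro rfl; exact hAP
    · rintro rfl
      refine ⟨⟨?_, by simp, by simp, ?_⟩, by simp⟩
      · simp [hA.ne_empty.symm]
      · intro B hB C hC x _ _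
        rw [Finset.mem_singleton.1 hB, Finset.mem_singleton.1 hC]
  rw [this]; simp

/-- some block contains `A` -/
def Has (A : Finset ι) (P : Finset (Finset ι)) : Prop := ∃ B ∈ P, A ⊆ B

/-- the next element of the block containing `A` is `x` -/
def Nxt (A s : Finset ι) (x : ι) (P : Finset (Finset ι)) : Prop :=
  ∃ B ∈ P, insert x A ⊆ B ∧ ∀ y ∈ B, y ∈ s → x ≤ y

lemma Zs_ite (W : Finset ι → ℂ) (U : Finset ι) (p : Finset (Finset ι) → Prop) :
    Zs W U p = ∑ P ∈ U.powerset.powerset, if IsPt U P ∧ p P then ∏ B ∈ P, W B else 0 := by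
  unfold Zs PtS
  rw [Finset.sum_filter]

lemma Zs_cases (W : Finset ι → ℂ) (ε : ℂ) (A s : Finset ι) (hA : A.Nonempty)
    (hAs : ∀ a ∈ A, ∀ b ∈ s, a < b) :
    Zs W (A ∪ s) (fun P => Cls ε P ∧ Has A P) =
      Zs W (A ∪ s) (fun P => Cls ε P ∧ A ∈ P) +
      ∑ x ∈ s, Zs W (A ∪ s) (fun P => Cls ε P ∧ Nxt A s x P) := by
  obtain ⟨a, ha⟩ := hA
  simp only [Zs_ite]
  rw [Finset.sum_comm, ← Finset.sum_add_distrib]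
  apply Finset.sum_congr rfl
  intro P _
  rcases Classical.em (IsPt (A ∪ s) P ∧ Cls ε P) with hP | hP
  swap
  · rw [if_neg (fun h => hP ⟨h.1, h.2.1⟩), if_neg (fun h => hP ⟨h.1, h.2.1⟩)]
    rw [Finset.sum_eq_zero, add_zero]
    intro x _
    rw [if_neg (fun h => hP ⟨h.1, h.2.1⟩)]
  have e : ∀ q : Prop, (IsPt (A ∪ s) P ∧ Cls ε P ∧ q) ↔ q := fun q =>
    ⟨fun h => h.2.2, fun h => ⟨hP.1, hP.2, h⟩⟩
  by_cases hH : Has A P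
  swap
  · rw [if_neg (fun h => hH ((e _).1 h)), if_neg (fun h => hH ⟨A, ((e _).1 h), subset_rfl⟩), Finset.sum_eq_zero, add_zero]
    rintro x _
    rw [if_neg]
    rintro ⟨_, _, B, hB, h1, _⟩
    exact hH ⟨B, hB, (Finset.subset_insert _ _).trans h1⟩
  rw [if_pos ((e _).2 hH)]
  obtain ⟨B, hB, hAB⟩ := hH
  have huniq : ∀ C ∈ P, A ⊆ C → C = B := fun C hC hAC =>
    hP.1.2.2.2 C hC B hB a (hAC ha) (hAB ha)
  rcases Classical.em (B.filter (fun y => y ∈ s)).Nonempty with hBs | hBs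
  · obtain ⟨x, hx, hmin⟩ := Finset.exists_min_image _ id hBs
    simp only [Finset.mem_filter, id, and_imp] at hx hmin
    rw [if_neg, zero_add, Finset.sum_eq_single x, if_pos]
    · refine (e _).2 ⟨B, hB, ?_, hmin⟩
      intro y hy
      rcases Finset.mem_insert.1 hy with rfl | hy
      · exact hx.1
      · exact hAB hy
    · intro y hy hne
      rw [if_neg]
      rintro ⟨_, _, C, hC, h1, h2⟩
      have : C = B := huniq C hC ((Finset.subset_insert _ _).trans h1)
      subst this
      exact hne (le_antisymm (h2 x hx.1 hx.2) (hmin y (h1 (Finset.mem_insert_self _ _)) hy))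
    · intro h; exact absurd hx.2 h
    · rintro ⟨_, _, hAP⟩
      have := huniq A hAP subset_rfl
      subst this
      exact lt_irrefl _ (hAs x hx.1 x hx.2)
  · have hBA : B = A := by
      refine Finset.Subset.antisymm ?_ hAB
      intro y hy
      rcases Finset.mem_union.1 (hP.1.2.1 B hB hy) with h | h
      · exact h
      · exact absurd ⟨y, Finset.mem_filter.2 ⟨hy, h⟩⟩ hBs
    subst hBA
    rw [if_pos ((e _).2 hB), Finset.sum_eq_zero, add_zero]
    intro y hy
    rw [if_neg]
    rintro ⟨_, _, C, hC, h1, h2⟩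
    have : C = B := huniq C hC ((Finset.subset_insert _ _).trans h1)
    subst this
    exact hBs ⟨y, Finset.mem_filter.2 ⟨h1 (Finset.mem_insert_self _ _), hy⟩⟩

lemma Zs_closed (W : Finset ι → ℂ) (ε : ℂ) (A s : Finset ι) (hA : A.Nonempty)
    (hAs : ∀ a ∈ A, ∀ b ∈ s, a < b) :
    Zs W (A ∪ s) (fun P => Cls ε P ∧ A ∈ P) = W A * Zs W s (Cls ε) := by
  have hd : Disjoint A s := by
    rw [Finset.disjoint_left]
    intro a ha hb
    exact lt_irrefl _ (hAs a ha a hb)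
  rw [← Zs_one W A hA]
  apply Zs_split W A s hd
  · intro P Q hP hQ
    have hcross : ∀ B ∈ P, ∀ C ∈ Q, okB ε B C ∧ okB ε C B := by
      intro B hB C hC
      have hlt : ∀ b ∈ B, ∀ c ∈ C, b < c := fun b hb c hc =>
        hAs b (hP.2.1 B hB hb) c (hQ.2.1 C hC hc)
      refine ⟨⟨?_, ?_⟩, ⟨?_, ?_⟩⟩
      · intro i hi j hj k hk l hl _ h2 _
        exact lt_asymm h2 (hlt k hk j hj)
      · intro _ i hi j hj k hk _ h2
        exact lt_asymm h2 (hlt k hk j hj)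
      · intro i hi j hj k hk l hl h1 _ _
        exact lt_asymm h1 (hlt j hj i hi)
      · intro _ i hi j hj k hk h1 _
        exact lt_asymm h1 (hlt j hj i hi)
    rw [Cls_union ε P Q hcross]
    constructor
    · rintro ⟨⟨_, h2⟩, h3⟩
      refine ⟨?_, h2⟩
      rcases Finset.mem_union.1 h3 with h | h
      · exact h
      · obtain ⟨a, ha⟩ := hA
        exact absurd (hQ.2.1 A h ha) (Finset.disjoint_left.1 hd ha)
    · rintro ⟨h1, h2⟩
      refine ⟨⟨?_, h2⟩, Finset.mem_union_left _ h1⟩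
      intro B hB C hC hne
      exfalso
      have : ∀ B ∈ P, B = A := by
        intro B hB
        obtain ⟨x, hx⟩ := Finset.nonempty_iff_ne_empty.2 (fun e => hP.1 (e ▸ hB) : B ≠ ∅)
        exact hP.2.2.2 B hB A h1 x hx (hP.2.1 B hB hx)
      exact hne ((this B hB).trans (this C hC).symm)
  · rintro P hP ⟨_, hAP⟩ B hB
    by_cases h : ∃ x ∈ B, x ∈ A
    · obtain ⟨x, hx, hxA⟩ := h
      left
      rw [hP.2.2.2 B hB A hAP x hx hxA]
    · right
      intro x hx
      rcases Finset.mem_union.1 (hP.2.1 B hB hx) with h' | h'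
      · exact absurd ⟨x, hx, h'⟩ h
      · exact h'

lemma Zs_next (W : Finset ι → ℂ) (ε : ℂ) (hε : ε = 0 ∨ ε = 1) (A s : Finset ι)
    (hA : A.Nonempty) (hAs : ∀ a ∈ A, ∀ b ∈ s, a < b) (x : ι) (hx : x ∈ s) :
    Zs W (A ∪ s) (fun P => Cls ε P ∧ Nxt A s x P) =
      (if s.filter (fun y => y < x) = ∅ then 1 else ε) * Zs W (s.filter (fun y => y < x)) (Cls ε) *
        Zs W (insert x A ∪ s.filter (fun y => x < y)) (fun P => Cls ε P ∧ Has (insert x A) P) := by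
  set g := s.filter (fun y => y < x) with hg
  set r := s.filter (fun y => x < y) with hr
  obtain ⟨a, ha⟩ := hA
  have hgm : ∀ y, y ∈ g ↔ y ∈ s ∧ y < x := fun y => by simp [hg]
  have hrm : ∀ y, y ∈ r ↔ y ∈ s ∧ x < y := fun y => by simp [hr]
  have hJm : ∀ y, y ∈ insert x A ∪ r ↔ (y = x ∨ y ∈ A) ∨ (y ∈ s ∧ x < y) := fun y => by
    simp only [Finset.mem_union, Finset.mem_insert, hrm]
  have hU : A ∪ s = g ∪ (insert x A ∪ r) := by
    ext y
    rw [Finset.mem_union, Finset.mem_union, hgm, hJm]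
    constructor
    · rintro (h | h)
      · exact Or.inr (Or.inl (Or.inr h))
      · rcases lt_trichotomy y x with h1 | h1 | h1
        · exact Or.inl ⟨h, h1⟩
        · exact Or.inr (Or.inl (Or.inl h1))
        · exact Or.inr (Or.inr ⟨h, h1⟩)
    · rintro (h | (rfl | h) | h)
      · exact Or.inr h.1
      · exact Or.inr hx
      · exact Or.inl h
      · exact Or.inr h.1
  have hpos : ∀ y ∈ insert x A ∪ r, (∀ z ∈ g, y < z) ∨ (∀ z ∈ g, z < y) := by
    intro y hy
    rcases (hJm y).1 hy with (rfl | h) | h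
    · exact Or.inr fun z hz => ((hgm z).1 hz).2
    · exact Or.inl fun z hz => hAs y h z ((hgm z).1 hz).1
    · exact Or.inr fun z hz => ((hgm z).1 hz).2.trans h.2
  have hd : Disjoint g (insert x A ∪ r) := by
    rw [Finset.disjoint_left]
    intro y h1 h2
    rcases hpos y h2 with h | h <;> exact lt_irrefl _ (h y h1)
  -- blocks of a class partition with next element `x` do not mix the gap
  have hnx : ∀ P, IsPt (A ∪ s) P → Cls ε P → Nxt A s x P →
      (ε = 0 → g = ∅) ∧ ∀ B ∈ P, B ⊆ g ∨ B ⊆ insert x A ∪ r := by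
    rintro P hP hC ⟨B0, hB0, h1, h2⟩
    have hxB : x ∈ B0 := h1 (Finset.mem_insert_self _ _)
    have haB : a ∈ B0 := h1 (Finset.mem_insert_of_mem ha)
    have hB0g : ∀ y ∈ g, y ∉ B0 := by
      intro y hy hyB
      have := (hgm y).1 hy
      exact absurd (h2 y hyB this.1) (not_le.2 this.2)
    constructor
    · intro he
      rw [Finset.eq_empty_iff_forall_notMem]
      intro c hc
      have hc' := (hgm c).1 hc
      obtain ⟨C, hCP, hcC⟩ := hP.2.2.1 c (Finset.mem_union_right _ hc'.1)
      have hne : B0 ≠ C := fun e => hB0g c hc (e ▸ hcC)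
      exact (hC B0 hB0 C hCP hne).2 he a haB c hcC x hxB (hAs a ha c hc'.1) hc'.2
    · intro C hCP
      by_cases hcg : ∃ c ∈ C, c ∈ g
      · left
        obtain ⟨c, hcC, hc⟩ := hcg
        have hc' := (hgm c).1 hc
        have hne : B0 ≠ C := fun e => hB0g c hc (e ▸ hcC)
        intro d hdC
        have hdU := hP.2.1 C hCP hdC
        rw [hU] at hdU
        rcases Finset.mem_union.1 hdU with h | h
        · exact h
        · exfalso
          rcases (hJm d).1 h with (h | h) | h
          · exact hne (hP.2.2.2 B0 hB0 C hCP d (by rw [h]; exact hxB) hdC)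
          · exact hne (hP.2.2.2 B0 hB0 C hCP d (h1 (Finset.mem_insert_of_mem h)) hdC)
          · exact (hC B0 hB0 C hCP hne).1 a haB c hcC x hxB d hdC (hAs a ha c hc'.1) hc'.2 h.2
      · right
        intro d hd
        have hdU := hP.2.1 C hCP hd
        rw [hU] at hdU
        rcases Finset.mem_union.1 hdU with h | h
        · exact absurd ⟨d, hd, h⟩ hcg
        · exact h
  by_cases hcase : ε = 0 ∧ g ≠ ∅
  · rw [if_neg hcase.2, hcase.1, zero_mul, zero_mul]
    unfold Zs
    refine Finset.sum_eq_zero fun P hPm => ?_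
    obtain ⟨hP, hC, hN⟩ := mem_Zs.1 hPm
    exfalso
    rw [← hcase.1] at hC
    exact hcase.2 ((hnx P hP hC hN).1 hcase.1)
  have hcoef : (if g = ∅ then (1:ℂ) else ε) = 1 := by
    split_ifs with h
    · rfl
    · rcases hε with h' | h'
      · exact absurd ⟨h', h⟩ hcase
      · exact h'
  rw [hcoef, one_mul]
  have hg0 : ε = 0 → g = ∅ := by
    intro h
    by_contra h'
    exact hcase ⟨h, h'⟩
  rw [hU]
  apply Zs_split W g _ hd
  · intro P Q hP hQ
    have hcross : ∀ B ∈ P, ∀ C ∈ Q, okB ε B C ∧ okB ε C B := by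
      intro B hB C hC
      have key : ∀ i ∈ B, ∀ j ∈ C, ∀ k ∈ B, i < j → j < k → False := by
        intro i hi j hj k hk h1 h2
        rcases hpos j (hQ.2.1 C hC hj) with h | h
        · exact lt_asymm h1 (h i (hP.2.1 B hB hi))
        · exact lt_asymm h2 (h k (hP.2.1 B hB hk))
      have hemp : ε = 0 → ∀ i ∈ B, False := by
        intro h0 i hi
        have := hP.2.1 B hB hi
        rw [hg0 h0] at this
        simp at this
      refine ⟨⟨?_, ?_⟩, ⟨?_, ?_⟩⟩
      · intro i hi j hj k hk l hl h1 h2 _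
        exact key i hi j hj k hk h1 h2
      · intro _ i hi j hj k hk h1 h2
        exact key i hi j hj k hk h1 h2
      · intro i hi j hj k hk l hl _ h2 h3
        exact key j hj k hk l hl h2 h3
      · intro h0 i hi j hj k hk _ _
        exact hemp h0 j hj
    rw [Cls_union ε P Q hcross, and_assoc]
    refine and_congr Iff.rfl (and_congr Iff.rfl ?_)
    constructor
    · rintro ⟨B, hB, h1, _⟩
      rcases Finset.mem_union.1 hB with h | h
      · have := hP.2.1 B h (h1 (Finset.mem_insert_self x A))
        exact absurd ((hgm x).1 this).2 (lt_irrefl x)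
      · exact ⟨B, h, h1⟩
    · rintro ⟨B, hB, h1⟩
      refine ⟨B, Finset.mem_union_right _ hB, h1, ?_⟩
      intro y hy hys
      rcases (hJm y).1 (hQ.2.1 B hB hy) with (rfl | h) | h
      · exact le_rfl
      · exact absurd (hAs y h y hys) (lt_irrefl y)
      · exact h.2.le
  · rintro P hP ⟨hC, hN⟩
    rw [← hU] at hP
    exact (hnx P hP hC hN).2

end Comb

section Wd

variable {ι α : Type*} [LinearOrder ι]

/-- the word read off along a finite set -/
noncomputable def word (w : ι → α) (s : Finset ι) : List α := (s.sort (· ≤ ·)).map w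

lemma sort_eq_of (s : Finset ι) (l : List ι) (hl : l.Pairwise (· < ·))
    (h : ∀ x, x ∈ l ↔ x ∈ s) : s.sort (· ≤ ·) = l := by
  apply List.Perm.eq_of_pairwise (le := (· ≤ ·))
  · intro a b _ _ h1 h2; exact le_antisymm h1 h2
  · exact Finset.pairwise_sort s (· ≤ ·)
  · exact hl.imp le_of_lt
  · rw [List.perm_ext_iff_of_nodup (Finset.sort_nodup s (· ≤ ·)) (hl.imp ne_of_lt)]
    intro a
    rw [Finset.mem_sort, h]

lemma sort_lt (s : Finset ι) : (s.sort (· ≤ ·)).Pairwise (· < ·) := by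
  have h1 := Finset.pairwise_sort s (· ≤ ·)
  have h2 := Finset.sort_nodup s (· ≤ ·)
  exact (h1.and h2).imp fun h => lt_of_le_of_ne h.1 h.2

lemma word_empty (w : ι → α) : word w ∅ = [] := by simp [word]

lemma word_singleton (w : ι → α) (x : ι) : word w {x} = [w x] := by simp [word]

lemma word_cons (w : ι → α) (m : ι) (s t : Finset ι) (h : ∀ x ∈ s, m < x)
    (ht : ∀ x, x ∈ t ↔ x = m ∨ x ∈ s) : word w t = w m :: word w s := by
  unfold word
  rw [sort_eq_of t (m :: s.sort (· ≤ ·)), List.map_cons]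
  · rw [List.pairwise_cons]
    exact ⟨fun x hx => h x (by simpa using hx), sort_lt s⟩
  · intro x; rw [ht]; simp

lemma word_snoc (w : ι → α) (m : ι) (s t : Finset ι) (h : ∀ x ∈ s, x < m)
    (ht : ∀ x, x ∈ t ↔ x = m ∨ x ∈ s) : word w t = word w s ++ [w m] := by
  unfold word
  rw [sort_eq_of t (s.sort (· ≤ ·) ++ [m]), List.map_append, List.map_singleton]
  · rw [List.pairwise_append]
    exact ⟨sort_lt s, by simp, fun x hx y hy => by
      rw [List.mem_singleton.1 hy]; exact h x (by simpa using hx)⟩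
  · intro x; rw [ht]; simp [or_comm]

lemma word_eq_nil (w : ι → α) (s : Finset ι) : word w s = [] ↔ s = ∅ := by
  constructor
  · intro h
    rw [word, List.map_eq_nil_iff] at h
    rw [Finset.eq_empty_iff_forall_notMem]
    intro x hx
    have := (Finset.mem_sort (· ≤ ·)).2 hx
    rw [h] at this
    simp at this
  · rintro rfl; exact word_empty w

lemma exists_min (s : Finset ι) (hs : s ≠ ∅) : ∃ (m : ι) (t : Finset ι), m ∈ s ∧ t.card < s.card ∧ (∀ x ∈ t, m < x) ∧
    ∀ x, x ∈ s ↔ x = m ∨ x ∈ t := by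
  obtain ⟨m, hm, hmin⟩ := Finset.exists_min_image s id (Finset.nonempty_iff_ne_empty.2 hs)
  refine ⟨m, s.erase m, hm, Finset.card_erase_lt_of_mem hm, ?_, ?_⟩
  · intro x hx
    obtain ⟨h1, h2⟩ := Finset.mem_erase.1 hx
    exact lt_of_le_of_ne (hmin x h2) (Ne.symm h1)
  · intro x
    rw [Finset.mem_erase]
    constructor
    · intro h
      by_cases e : x = m
      · exact Or.inl e
      · exact Or.inr ⟨e, h⟩
    · rintro (rfl | h)
      · exact hm
      · exact h.2

lemma sum_splits (w : ι → α) : ∀ (n : ℕ) (s : Finset ι), s.card = n →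
    ∀ F : List α → α → List α → ℂ,
    ∑ x ∈ s, F (word w (s.filter (fun y => y < x))) (w x) (word w (s.filter (fun y => x < y))) =
      splitSum F (word w s) := by
  intro n
  induction n using Nat.strong_induction_on with
  | _ n ih =>
  intro s hn F
  rcases Classical.em (s = ∅) with rfl | hs
  · simp [word_empty, splitSum]
  obtain ⟨m, t, hm, hc, hlt, hmem⟩ := exists_min s hs
  have hmt : m ∉ t := fun h => lt_irrefl _ (hlt m h)
  have hst : s = Finset.cons m t hmt := by
    ext x; rw [hmem, Finset.mem_cons]
  have e1 : s.filter (fun y => y < m) = ∅ := by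
    rw [Finset.eq_empty_iff_forall_notMem]
    intro y hy
    rw [Finset.mem_filter, hmem] at hy
    rcases hy with ⟨rfl | h, h2⟩
    · exact lt_irrefl _ h2
    · exact lt_asymm h2 (hlt y h)
  have e2 : s.filter (fun y => m < y) = t := by
    ext y
    rw [Finset.mem_filter, hmem]
    constructor
    · rintro ⟨rfl | h, h2⟩
      · exact absurd h2 (lt_irrefl _)
      · exact h
    · intro h; exact ⟨Or.inr h, hlt y h⟩
  have e3 : ∀ x ∈ t, word w (s.filter (fun y => y < x)) =
      w m :: word w (t.filter (fun y => y < x)) := by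
    intro x hx
    apply word_cons
    · intro y hy; exact hlt y (Finset.mem_filter.1 hy).1
    · intro y
      rw [Finset.mem_filter, Finset.mem_filter, hmem]
      constructor
      · rintro ⟨rfl | h, h2⟩
        · exact Or.inl rfl
        · exact Or.inr ⟨h, h2⟩
      · rintro (rfl | h)
        · exact ⟨Or.inl rfl, hlt x hx⟩
        · exact ⟨Or.inr h.1, h.2⟩
  have e4 : ∀ x ∈ t, s.filter (fun y => x < y) = t.filter (fun y => x < y) := by
    intro x hx
    ext y
    rw [Finset.mem_filter, Finset.mem_filter, hmem]
    constructor
    · rintro ⟨rfl | h, h2⟩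
      · exact absurd h2 (lt_asymm (hlt x hx))
      · exact ⟨h, h2⟩
    · rintro h; exact ⟨Or.inr h.1, h.2⟩
  rw [word_cons w m t s hlt hmem, splitSum, ← ih t.card (by omega) t rfl]
  have : ∀ G : ι → ℂ, ∑ x ∈ s, G x = G m + ∑ x ∈ t, G x := by
    intro G; rw [hst, Finset.sum_cons]
  rw [this, e1, e2, word_empty]
  congr 1
  apply Finset.sum_congr rfl
  intro x hx
  rw [e3 x hx, e4 x hx]

/-- uniform recursion -/
lemma Kf_rec (ε : ℂ) (hε : ε * ε = ε) (L : List α → ℂ) (u w : List α) :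
    Kf ε L u w = L u * Fk ε L w [] + splitSum (fun g y r =>
      (if g = [] then 1 else ε) * Fk ε L g [] * Kf ε L (u ++ [y]) r) w := by
  cases w with
  | nil => simp [Kf_nil, splitSum, Fk]
  | cons x w =>
    rw [Kf_cons ε hε, splitSum, ← splitSum_mul]
    simp only [if_true, reduceCtorEq, if_false, Fk, one_mul, mul_assoc, add_assoc]

lemma Zs_eq_Fk (ε : ℂ) (hε : ε = 0 ∨ ε = 1) (L : List α → ℂ) (w : ι → α) :
    ∀ (n : ℕ) (s : Finset ι), s.card = n →
    Zs (fun B => L (word w B)) s (Cls ε) = Fk ε L (word w s) [] ∧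
    ∀ A : Finset ι, A.Nonempty → (∀ a ∈ A, ∀ b ∈ s, a < b) →
      Zs (fun B => L (word w B)) (A ∪ s) (fun P => Cls ε P ∧ Has A P) =
        Kf ε L (word w A) (word w s) := by
  have hε2 : ε * ε = ε := by rcases hε with rfl | rfl <;> simp
  intro n
  induction n using Nat.strong_induction_on with
  | _ n ih =>
  intro s hn
  have hA : Zs (fun B => L (word w B)) s (Cls ε) = Fk ε L (word w s) [] := by
    rcases Classical.em (s = ∅) with rfl | hs
    · rw [Zs_empty, word_empty, Fk]
    obtain ⟨m, t, hm, hc, hlt, hmem⟩ := exists_min s hs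
    have := (ih t.card (by omega) t rfl).2 {m} ⟨m, by simp⟩ (by
      intro a ha b hb
      rw [Finset.mem_singleton.1 ha]; exact hlt b hb)
    rw [word_cons w m t s hlt hmem, Fk_cons_eq_Kf, ← word_singleton w m, ← this]
    have e : {m} ∪ t = s := by
      ext x; rw [Finset.mem_union, Finset.mem_singleton, hmem]
    rw [e]
    apply Zs_congr
    intro P hP
    constructor
    · intro h
      obtain ⟨B, hB, hmB⟩ := hP.2.2.1 m hm
      exact ⟨h, B, hB, by simpa using hmB⟩
    · exact fun h => h.1
  refine ⟨hA, ?_⟩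
  intro A hAne hAs
  rw [Zs_cases _ ε A s hAne hAs, Zs_closed _ ε A s hAne hAs, hA, Kf_rec ε hε2,
    ← sum_splits w s.card s rfl]
  congr 1
  apply Finset.sum_congr rfl
  intro x hx
  rw [Zs_next _ ε hε A s hAne hAs x hx]
  have hcl : (s.filter (fun y => y < x)).card < n := by
    rw [← hn]; apply Finset.card_lt_card
    rw [Finset.filter_ssubset]; exact ⟨x, hx, lt_irrefl x⟩
  have hcr : (s.filter (fun y => x < y)).card < n := by
    rw [← hn]; apply Finset.card_lt_card
    rw [Finset.filter_ssubset]; exact ⟨x, hx, lt_irrefl x⟩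
  rw [(ih _ hcl _ rfl).1, (ih _ hcr _ rfl).2 (insert x A) ⟨x, Finset.mem_insert_self _ _⟩ (by
    intro a ha b hb
    have hb' := Finset.mem_filter.1 hb
    rcases Finset.mem_insert.1 ha with h | h
    · rw [h]; exact hb'.2
    · exact hAs a h b hb'.1)]
  rw [word_snoc w x A (insert x A) (fun a ha => hAs a ha x hx) (fun y => Finset.mem_insert)]
  simp only [word_eq_nil]

end Wd

section Transfer

variable {k : ℕ}

/-- series as functions on words -/
noncomputable def gL (f : NCSeries k) : List (Fin k) → ℂ
  | [] => 0
  | x :: l => f l.length (fun j => (x :: l).get j)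

lemma gL_eq (f : NCSeries k) (n : ℕ) (l : List (Fin k)) (hl : l.length = n + 1) :
    gL f l = f n (fun j => l.get (Fin.cast hl.symm j)) := by
  cases l with
  | nil => simp at hl
  | cons x l =>
    simp only [List.length_cons, Nat.add_right_cancel_iff] at hl
    subst hl
    rfl

lemma gL_ofFn (f : NCSeries k) (n : ℕ) (w : Fin (n + 1) → Fin k) :
    gL f (List.ofFn w) = f n w := by
  rw [gL_eq f n _ (by simp)]
  congr 1
  funext j
  rw [List.get_ofFn]
  rfl

lemma partCoeff_eq (f : NCSeries k) {m : ℕ} (w : Fin (m + 1) → Fin k) (B : Finset (Fin (m + 1)))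
    (hB : B.Nonempty) : partCoeff f w B = gL f (word w B) := by
  have hc := Finset.card_pos.2 hB
  rw [partCoeff, dif_pos hB, gL_eq f (B.card - 1) _ (by
    simp only [word, List.length_map, Finset.length_sort]; omega)]
  congr 1
  funext j
  rw [Finset.coe_orderIsoOfFin_apply, Finset.orderEmbOfFin_apply]
  simp only [word, List.get_eq_getElem, List.getElem_map, Fin.getElem_fin]
  refine congrArg w (List.getElem_of_eq ?_ _)
  congr!

lemma word_univ {m : ℕ} (w : Fin m → Fin k) : word w Finset.univ = List.ofFn w := by
  unfold word
  rw [sort_eq_of Finset.univ (List.ofFn id)]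
  · rw [List.map_ofFn]; rfl
  · rw [List.pairwise_ofFn]; intro i j h; exact h
  · intro x; simp [List.mem_ofFn]

lemma isPt_parts {m : ℕ} (π : FP m) : IsPt Finset.univ π.parts := by
  refine ⟨π.bot_notMem, fun B _ => Finset.subset_univ B, ?_, ?_⟩
  · intro x hx; exact π.exists_mem hx
  · intro B hB C hC x hxB hxC
    exact π.eq_of_mem_parts hB hC hxB hxC

lemma exists_parts {m : ℕ} (P : Finset (Finset (Fin m))) (h : IsPt Finset.univ P) :
    ∃ π : FP m, π.parts = P := by
  refine ⟨Finpartition.ofExistsUnique P (fun B _ => Finset.subset_univ B) ?_ h.1, rfl⟩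
  intro x hx
  obtain ⟨B, hB, hxB⟩ := h.2.2.1 x hx
  exact ⟨B, ⟨hB, hxB⟩, fun C hC => h.2.2.2 C hC.1 B hB x hC.2 hxB⟩

lemma Cls_one_iff {m : ℕ} (π : FP m) : Cls 1 π.parts ↔ IsNC π := by
  have hp := isPt_parts π
  constructor
  · rintro h i j a b h1 h2 h3 ⟨B, hB, hi, ha⟩ ⟨C, hC, hj, hb⟩
    by_cases e : B = C
    · exact ⟨B, hB, hi, e ▸ hj⟩
    · exact ((h B hB C hC e).1 i hi j hj a ha b hb h1 h2 h3).elim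
  · intro h B hB C hC hne
    refine ⟨?_, fun h => absurd h one_ne_zero⟩
    intro i hi j hj a ha b hb h1 h2 h3
    obtain ⟨D, hD, hDi, hDj⟩ := h i j a b h1 h2 h3 ⟨B, hB, hi, ha⟩ ⟨C, hC, hj, hb⟩
    exact hne ((hp.2.2.2 B hB D hD i hi hDi).trans (hp.2.2.2 D hD C hC j hDj hj))

lemma Cls_zero_iff {m : ℕ} (π : FP m) : Cls 0 π.parts ↔ IsIntervalPartition π := by
  have hp := isPt_parts π
  constructor
  · intro h B hB x hx z hz y hxy hyz
    obtain ⟨C, hC, hyC⟩ := hp.2.2.1 y (Finset.mem_univ y)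
    by_cases e : B = C
    · rw [e]; exact hyC
    · rcases hxy.eq_or_lt with rfl | h1
      · exact hx
      rcases hyz.eq_or_lt with rfl | h2
      · exact hz
      exact ((h B hB C hC e).2 rfl x hx y hyC z hz h1 h2).elim
  · intro h B hB C hC hne
    have key : ∀ i ∈ B, ∀ j ∈ C, ∀ k ∈ B, i < j → j < k → False := by
      intro i hi j hj a ha h1 h2
      exact hne (hp.2.2.2 B hB C hC j (h B hB i hi a ha j h1.le h2.le) hj)
    exact ⟨fun i hi j hj a ha b hb h1 h2 _ => key i hi j hj a ha h1 h2, fun _ => key⟩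

lemma sum_FP (f : NCSeries k) (ε : ℂ) (hε : ε = 0 ∨ ε = 1) {n : ℕ} (w : Fin (n + 1) → Fin k)
    (q : FP (n + 1) → Prop) (hq : ∀ π : FP (n + 1), Cls ε π.parts ↔ q π) :
    (∑ π : FP (n + 1), if q π then genCoeff f w π else 0) = Fk ε (gL f) (List.ofFn w) [] := by
  rw [← word_univ, ← (Zs_eq_Fk ε hε (gL f) w _ Finset.univ rfl).1, ← Finset.sum_filter]
  unfold Zs
  refine Finset.sum_bij (fun π _ => π.parts) ?_ ?_ ?_ ?_
  · intro π hπ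
    exact mem_Zs.2 ⟨isPt_parts π, (hq π).2 (Finset.mem_filter.1 hπ).2⟩
  · intro π _ ρ _ h
    exact Finpartition.ext h
  · intro P hP
    obtain ⟨h1, h2⟩ := mem_Zs.1 hP
    obtain ⟨π, rfl⟩ := exists_parts P h1
    exact ⟨π, Finset.mem_filter.2 ⟨Finset.mem_univ _, (hq π).1 h2⟩, rfl⟩
  · intro π _
    unfold genCoeff
    apply Finset.prod_congr rfl
    intro B hB
    exact partCoeff_eq f w B (π.nonempty_of_mem_parts hB)

/-- `f` is the `ε`-transform of `μ` -/
def IsTr (ε : ℂ) (μ : Dist k) (f : NCSeries k) : Prop :=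
  ∀ w, w ≠ [] → momL μ w = Fk ε (gL f) w []

lemma isTr_iff (ε : ℂ) (μ : Dist k) (f : NCSeries k) :
    IsTr ε μ f ↔ ∀ (n : ℕ) (w : Fin (n + 1) → Fin k),
      momentSeries μ n w = Fk ε (gL f) (List.ofFn w) [] := by
  constructor
  · intro h n w
    rw [momentSeries_eq]
    apply h
    simp
  · intro h w hw
    cases w with
    | nil => exact absurd rfl hw
    | cons x l =>
      have := h l.length (fun j => (x :: l).get j)
      have e : List.ofFn (fun j => (x :: l).get j) = x :: l := List.ofFn_get _
      rw [momentSeries_eq] at this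
      rw [← e]; exact this

lemma isR_iff (μ : Dist k) (f : NCSeries k) : IsRTransform μ f ↔ IsTr 1 μ f := by
  rw [isTr_iff]
  unfold IsRTransform
  simp only [sum_FP f 1 (Or.inr rfl) _ IsNC Cls_one_iff]

lemma isEta_iff (μ : Dist k) (f : NCSeries k) : IsEtaSeries μ f ↔ IsTr 0 μ f := by
  rw [isTr_iff]
  unfold IsEtaSeries
  simp only [sum_FP f 0 (Or.inl rfl) _ IsIntervalPartition Cls_zero_iff]

end Transfer

section Assembly

open Filter

variable {k : ℕ}

/-- functions on words as series -/
def ofL (L : List (Fin k) → ℂ) : NCSeries k := fun _ w => L (List.ofFn w)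

lemma gL_ofL (L : List (Fin k) → ℂ) (u : List (Fin k)) (hu : u ≠ []) : gL (ofL L) u = L u := by
  cases u with
  | nil => exact absurd rfl hu
  | cons x l =>
    have e : List.ofFn (fun j => (x :: l).get j) = x :: l := List.ofFn_get _
    change L (List.ofFn (fun j => (x :: l).get j)) = _
    rw [e]

lemma gL_smul (c : ℂ) (f : NCSeries k) (u : List (Fin k)) :
    gL (fun n w => c * f n w) u = c * gL f u := by
  cases u with
  | nil => simp [gL]
  | cons x l => rfl

lemma Fk_congr {α : Type*} (ε : ℂ) (L L' : List α → ℂ) (h : ∀ u, u ≠ [] → L u = L' u)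
    (w : List α) (s : List (List α)) : Fk ε L w s = Fk ε L' w s :=
  tendsto_nhds_unique (tendsto_const_nhds (f := (atTop : Filter ℕ)))
    (Fk_tendsto ε (fun _ => L) L' (fun u hu => by
      simp only [h u hu]; exact tendsto_const_nhds) w s)

lemma momL_nil (μ : Dist k) (h : IsDalg μ) : momL μ [] = 1 := by
  simpa [momL, IsDalg] using h

lemma isTr_all (ε : ℂ) (μ : Dist k) (h : IsDalg μ) (f : NCSeries k) (hf : IsTr ε μ f)
    (w : List (Fin k)) : momL μ w = Fk ε (gL f) w [] := by
  cases w with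
  | nil => rw [momL_nil μ h, Fk]
  | cons x l => exact hf _ (by simp)

lemma isTr_ofL (ε : ℂ) (μ : Dist k) (L : List (Fin k) → ℂ)
    (h : ∀ w, w ≠ [] → momL μ w = Fk ε L w []) : IsTr ε μ (ofL L) := by
  intro w hw
  rw [h w hw]
  exact Fk_congr ε _ _ (fun u hu => (gL_ofL L u hu).symm) w []

lemma limit_core (ε ε' : ℂ) (hε : ε = 0 ∨ ε = 1) (hε' : ε' = 0 ∨ ε' = 1)
    (μs as bs : ℕ → Dist k) (hμ : ∀ N, IsDc (μs N)) (p : ℕ → ℕ) (hp0 : ∀ N, 0 < p N)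
    (hp : Tendsto p atTop atTop) (has : ∀ N, IsDalg (as N)) (hbs : ∀ N, IsDalg (bs N))
    (ha : ∀ N, ∃ f, IsTr ε (μs N) f ∧ IsTr ε (as N) (fun n w => (p N : ℂ) * f n w))
    (hb : ∀ N, ∃ f, IsTr ε' (μs N) f ∧ IsTr ε' (bs N) (fun n w => (p N : ℂ) * f n w))
    (ν : Dist k) (hν : IsDc ν) (hc : ConvInMoments as ν) :
    ∃ (L : List (Fin k) → ℂ) (D : ℝ), IsTr ε ν (ofL L) ∧
      (∀ w, Tendsto (fun N => momL (bs N) w) atTop (nhds (Fk ε' L w []))) ∧ 0 < D ∧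
      (∀ u, u ≠ [] → ‖L u‖ ≤ D ^ u.length) ∧
      (∀ w, w ≠ [] → star (L w) = L w.reverse) ∧ PSDK (cker L) := by
  have e1 : ε * ε = ε := by rcases hε with rfl | rfl <;> simp
  have e1' : ε' * ε' = ε' := by rcases hε' with rfl | rfl <;> simp
  have e2 : ‖ε‖ ≤ 1 := by rcases hε with rfl | rfl <;> simp
  choose f hf1 hf2 using ha
  choose g hg1 hg2 using hb
  have hFa : ∀ w, Tendsto (fun N => Fk ε (gL fun n w => (p N : ℂ) * f N n w) w []) atTop
      (nhds (momL ν w)) := by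
    intro w
    refine (hc ((w.map (FreeAlgebra.ι ℂ)).prod)).congr fun N => ?_
    exact isTr_all ε (as N) (has N) _ (hf2 N) w
  obtain ⟨L, hL⟩ := L_tendsto_of_Fk ε e1 _ _ hFa
  have hν' : ∀ w, momL ν w = Fk ε L w [] := fun w =>
    tendsto_nhds_unique (hFa w) (Fk_tendsto ε _ L hL w [])
  have hL1 : ∀ u, u ≠ [] → Tendsto (fun N => (p N : ℂ) * gL (f N) u) atTop (nhds (L u)) := by
    intro u hu
    simpa only [gL_smul] using hL u hu
  have hM : ∀ w, w ≠ [] → Tendsto (fun N => (p N : ℂ) * momL (μs N) w) atTop (nhds (L w)) := by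
    intro w hw
    refine (scaled_Fk_of_L ε e1 p hp hp0 (fun N => gL (f N)) L hL1 w hw).congr fun N => ?_
    rw [hf1 N w hw]
  have hG : ∀ u, u ≠ [] → Tendsto (fun N => (p N : ℂ) * gL (g N) u) atTop (nhds (L u)) := by
    refine scaled_L_of_Fk ε' e1' p hp hp0 (fun N => gL (g N)) L fun w hw => ?_
    refine (hM w hw).congr fun N => ?_
    rw [hg1 N w hw]
  obtain ⟨⟨C, hC, hCb⟩, _, _⟩ := Dc_facts ν hν
  refine ⟨L, 12 * C, isTr_ofL ε ν L fun w _ => hν' w, ?_, by positivity, ?_, ?_, ?_⟩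
  · intro w
    refine (Fk_tendsto ε' (fun N => gL fun n w => (p N : ℂ) * g N n w) L
      (fun u hu => ?_) w []).congr fun N => ?_
    · simpa only [gL_smul] using hG u hu
    · exact (isTr_all ε' (bs N) (hbs N) _ (hg2 N) w).symm
  · exact L_bound_of_Fk ε e1 e2 L C hC.le fun w => by rw [← hν']; exact hCb w
  · intro w hw
    refine tendsto_nhds_unique (hM w hw).star ?_
    refine (hM w.reverse (by simpa using hw)).congr fun N => ?_
    rw [star_mul', (Dc_facts (μs N) (hμ N)).2.1 w]
    simp
  · refine PSDK.of_tendsto (Ks := fun N (u v : NE (Fin k)) =>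
      (p N : ℂ) * momL (μs N) (v.1 ++ u.1.reverse)) (fun N => ?_) ?_
    · exact PSDK.smul (PSDK.comp (Dc_facts (μs N) (hμ N)).2.2 Subtype.val)
        (by exact_mod_cast Nat.zero_le _)
    · intro u v
      exact hM _ (by simp [v.2])

lemma exists_of_L (ε : ℂ) (hε : ε = 0 ∨ ε = 1) (L : List (Fin k) → ℂ) (D : ℝ) (hD : 0 < D)
    (hb : ∀ u, u ≠ [] → ‖L u‖ ≤ D ^ u.length)
    (hH : ∀ w, w ≠ [] → star (L w) = L w.reverse) (hL : PSDK (cker L)) :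
    ∃ μ : Dist k, IsDc μ ∧ ∀ w, momL μ w = Fk ε L w [] := by
  have e1 : ε * ε = ε := by rcases hε with rfl | rfl <;> simp
  have e2 : ‖ε‖ ≤ 1 := by rcases hε with rfl | rfl <;> simp
  have e3 : 0 ≤ ε := by rcases hε with rfl | rfl <;> simp
  have e4 : ε ≤ 1 := by rcases hε with rfl | rfl <;> simp
  apply exists_Dc (fun w => Fk ε L w []) (by simp [Fk]) (Fk_psd ε e1 e3 e4 L hH hL) (4 * D)
    (by positivity)
  intro w
  simpa using Fk_bound_of_L ε e2 L D hD.le hb w []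

lemma infDiv_of_L (L : List (Fin k) → ℂ) (D : ℝ) (hD : 0 < D)
    (hb : ∀ u, u ≠ [] → ‖L u‖ ≤ D ^ u.length)
    (hH : ∀ w, w ≠ [] → star (L w) = L w.reverse) (hL : PSDK (cker L)) :
    ∃ μ : Dist k, IsInfDiv μ ∧ ∀ w, momL μ w = Fk 1 L w [] := by
  obtain ⟨ν, hν, hνL⟩ := exists_of_L 1 (Or.inr rfl) L D hD hb hH hL
  refine ⟨ν, ⟨hν, fun N hN => ?_⟩, hνL⟩
  have hN' : (N : ℂ) ≠ 0 := by exact_mod_cast hN.ne'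
  have hc : (0 : ℂ) ≤ (N : ℂ)⁻¹ := by
    have h : (0 : ℝ) ≤ (N : ℝ)⁻¹ := by positivity
    have h2 := Complex.zero_le_real.2 h
    rwa [Complex.ofReal_inv, Complex.ofReal_natCast] at h2
  obtain ⟨ρ, hρ, hρL⟩ := exists_of_L 1 (Or.inr rfl) (fun u => (N : ℂ)⁻¹ * L u) D hD
    (by
      intro u hu
      rw [norm_mul, norm_inv, Complex.norm_natCast]
      refine le_trans (mul_le_of_le_one_left (norm_nonneg _) ?_) (hb u hu)
      exact inv_le_one_of_one_le₀ (by exact_mod_cast hN))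
    (by
      intro w hw
      rw [star_mul', hH w hw]
      simp)
    (PSDK.smul hL hc)
  refine ⟨ρ, hρ, ofL (fun u => (N : ℂ)⁻¹ * L u), ?_, ?_⟩
  · rw [isR_iff]
    exact isTr_ofL 1 ρ _ fun w _ => hρL w
  · rw [isR_iff]
    intro w hw
    rw [hνL]
    refine Fk_congr 1 _ _ (fun u hu => ?_) w []
    rw [gL_smul, gL_ofL _ u hu, mul_inv_cancel_left₀ hN']

end Assembly


/-- Theorem 1': for `(μ_N)` in `D_c(k)` and positive integers
`p₁ < p₂ < ⋯`, with `f_N` the `p_N`-fold free convolution and `b_N` the `p_N`-fold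
Boolean convolution of `μ_N`: `f_N` converges in moments to some `⊞`-infinitely
divisible `ν ∈ D_c(k)` iff `b_N` converges in moments to some `μ ∈ D_c(k)`;
moreover in that case the limits satisfy `𝔹(μ) = ν`. -/
theorem statement13 (k : ℕ) (hk : 0 < k) (μseq : ℕ → Dist k)
    (hμseq : ∀ N, IsDc (μseq N))
    (p : ℕ → ℕ) (hp : ∀ N, 0 < p N) (hpmono : StrictMono p)
    (bseq fseq : ℕ → Dist k)
    (hbalg : ∀ N, IsDalg (bseq N)) (hfalg : ∀ N, IsDalg (fseq N))
    (hb : ∀ N, IsNFoldBool (p N) (μseq N) (bseq N))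
    (hf : ∀ N, IsNFoldFree (p N) (μseq N) (fseq N)) :
    ((∃ ν : Dist k, IsInfDiv ν ∧ ConvInMoments fseq ν) ↔
      (∃ μ : Dist k, IsDc μ ∧ ConvInMoments bseq μ)) ∧
    (∀ μ ν : Dist k, IsDc μ → ConvInMoments bseq μ →
      IsInfDiv ν → ConvInMoments fseq ν → IsBP μ ν) := by
  have hpt : Filter.Tendsto p Filter.atTop Filter.atTop := hpmono.tendsto_atTop
  have hb' : ∀ N, ∃ f, IsTr 0 (μseq N) f ∧ IsTr 0 (bseq N) (fun n w => (p N : ℂ) * f n w) := by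
    intro N
    obtain ⟨f, h1, h2⟩ := hb N
    exact ⟨f, (isEta_iff _ _).1 h1, (isEta_iff _ _).1 h2⟩
  have hf' : ∀ N, ∃ f, IsTr 1 (μseq N) f ∧ IsTr 1 (fseq N) (fun n w => (p N : ℂ) * f n w) := by
    intro N
    obtain ⟨f, h1, h2⟩ := hf N
    exact ⟨f, (isR_iff _ _).1 h1, (isR_iff _ _).1 h2⟩
  refine ⟨⟨?_, ?_⟩, ?_⟩
  · rintro ⟨ν, hν, hc⟩
    obtain ⟨L, D, _, hconv, hD, hbd, hH, hL⟩ := limit_core 1 0 (Or.inr rfl) (Or.inl rfl) μseq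
      fseq bseq hμseq p hp hpt hfalg hbalg hf' hb' ν hν.1 hc
    obtain ⟨μ, hμ, hμL⟩ := exists_of_L 0 (Or.inl rfl) L D hD hbd hH hL
    refine ⟨μ, hμ, conv_of_words _ _ fun w => ?_⟩
    rw [hμL]; exact hconv w
  · rintro ⟨μ, hμ, hc⟩
    obtain ⟨L, D, _, hconv, hD, hbd, hH, hL⟩ := limit_core 0 1 (Or.inl rfl) (Or.inr rfl) μseq
      bseq fseq hμseq p hp hpt hbalg hfalg hb' hf' μ hμ hc
    obtain ⟨ν, hν, hνL⟩ := infDiv_of_L L D hD hbd hH hL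
    refine ⟨ν, hν, conv_of_words _ _ fun w => ?_⟩
    rw [hνL]; exact hconv w
  · intro μ ν hμ hbc hν hfc
    obtain ⟨L, D, hT, hconv, _, _, _, _⟩ := limit_core 0 1 (Or.inl rfl) (Or.inr rfl) μseq
      bseq fseq hμseq p hp hpt hbalg hfalg hb' hf' μ hμ hbc
    refine ⟨ofL L, (isEta_iff _ _).2 hT, (isR_iff _ _).2 (isTr_ofL 1 ν L fun w _ => ?_)⟩
    exact tendsto_nhds_unique (hfc ((w.map (FreeAlgebra.ι ℂ)).prod)) (hconv w)

end BBP
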